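/- Let T be a complete discrete valuation ring whose residue field has characteristic p > 0, and let K be its fraction field. Let E_P be a finite Galois field extension of Frac(T⟦x⟧) whose degree is not divisible by p. Then there exists a finite separable field extension E of the rational function field K(x) such that E ⊗_{K(x)} Frac(T⟦x⟧) is isomorphic to E_P as a Frac(T⟦x⟧)-algebra. -/

import Mathlib

open scoped TensorProduct

attribute [local instance] Algebra.TensorProduct.rightAlgebra

/-!
Let `ϖ` be the image of a uniformizer of `T` in `R = T⟦x⟧`. Then `A = R_(ϖ)` is a discrete valuation
ring with infinite residue field. Since `n = [E_P : Frac R]` is invertible in that residue field,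
the integral closure `B` of `A` in `E_P` is tamely ramified and, being semilocal, principal:
`ϖ = π ^ e * v` with `v` a unit and `π` a generator of the radical. The residue algebra `B / π` is a
finite product of separable extensions whose degrees are invertible, so it has a primitive element
`y`, a root of some monic `f` of degree `n / e`.

Weierstrass preparation and division allow us to choose `f` over `T[x]`, because a perturbation by
multiples of `x` moves `y` only slightly by the Newton iteration in the `x`-adically complete ring
`R`. In the same way `v` is, up to an `e`-th power, the inverse of the value at `y` of a polynomial
`u` over `T[x]`. Solving `f(α) = π * ρ` with `ρ ^ e` close to `v * u(α)` gives a generator `α` of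
`B` over `A` at which `h = f ^ e - ϖ * u`, monic of degree `n`, is divisible by a high power of `ϖ`.
Perturbing `h` once more, Krasner's lemma yields a monic polynomial of degree `n` over `T[x]` with
a root generating `E_P`. It is then irreducible over `K(x)`, and adjoining one of its roots there
gives `E`.
-/

open Polynomial

section AdicNewton

theorem isAdicComplete_of_linearEquiv {R M N : Type*} [CommRing R] (I : Ideal R)
    [AddCommGroup M] [Module R M] [AddCommGroup N] [Module R N] [IsAdicComplete I M]
    (e : M ≃ₗ[R] N) : IsAdicComplete I N := by
  have of_eq : ⇑(AdicCompletion.of I N) =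
      AdicCompletion.congr I e ∘ AdicCompletion.of I M ∘ e.symm := by
    ext1 y
    simp [AdicCompletion.map_of]
  rw [← AdicCompletion.of_bijective_iff, of_eq]
  exact (AdicCompletion.congr I e).bijective.comp
    ((AdicCompletion.of_bijective I M).comp e.symm.bijective)

universe u in
theorem isAdicComplete_of_finite {R : Type u} [CommRing R] [IsNoetherianRing R] (I : Ideal R)
    [IsAdicComplete I R] (M : Type*) [AddCommGroup M] [Module R M] [Module.Finite R M] :
    IsAdicComplete I M := by
  have small_case (N : Type u) [AddCommGroup N] [Module R N] [Module.Finite R N] :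
      IsAdicComplete I N := by
    let e : N ≃ₗ[R] AdicCompletion I R ⊗[R] N := (TensorProduct.lid R N).symm ≪≫ₗ
      TensorProduct.congr
        (LinearEquiv.ofBijective (AdicCompletion.of I R) (AdicCompletion.of_bijective I R))
        (LinearEquiv.refl R N)
    have of_eq : ⇑(AdicCompletion.of I N) = AdicCompletion.ofTensorProduct I N ∘ e := by
      ext1 y
      have he : e y = (1 : AdicCompletion I R) ⊗ₜ[R] y := rfl
      simp [he, AdicCompletion.ofTensorProduct_tmul]
    rw [← AdicCompletion.of_bijective_iff, of_eq]
    exact (AdicCompletion.ofTensorProduct_bijective_of_finite_of_isNoetherian I N).comp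
      e.bijective
  obtain ⟨n, π, hπ⟩ := Module.Finite.exists_fin' R M
  have := small_case ((Fin n → R) ⧸ LinearMap.ker π)
  exact isAdicComplete_of_linearEquiv I (π.quotKerEquivOfSurjective hπ)

theorem isAdicComplete_map_algebraMap_of_finite {R S : Type*} [CommRing R] [IsNoetherianRing R]
    (I : Ideal R) [IsAdicComplete I R] [CommRing S] [Algebra R S] [Module.Finite R S] :
    IsAdicComplete (I.map (algebraMap R S)) S :=
  (IsAdicComplete.map_algebraMap_iff I S).2 (isAdicComplete_of_finite I S)

variable {S : Type*} [CommRing S] {J : Ideal S}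

/-- Newton's iteration for a root of `f` starting at `a`, with the inverse of the derivative
replaced throughout by a fixed approximate inverse `w` of `f'(a)`. -/
def newtonSeq (f : S[X]) (a w : S) : ℕ → S
  | 0 => a
  | n + 1 => newtonSeq f a w n - f.eval (newtonSeq f a w n) * w

theorem newtonSeq_sub_mem_and_eval_mem {f : S[X]} {a w : S} (ha : f.eval a ∈ J)
    (hw : 1 - f.derivative.eval a * w ∈ J) (n : ℕ) :
    newtonSeq f a w n - a ∈ J ∧ f.eval (newtonSeq f a w n) ∈ J ^ (n + 1) := by
  induction n with
  | zero => simpa [newtonSeq] using ha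
  | succ n ih =>
    obtain ⟨hs, hfs⟩ := ih
    rw [newtonSeq]
    set s := newtonSeq f a w n
    have hfsJ : f.eval s ∈ J := Ideal.pow_le_self n.succ_ne_zero hfs
    constructor
    · rw [sub_right_comm]
      exact sub_mem hs (J.mul_mem_right w hfsJ)
    · obtain ⟨k, hk⟩ := f.binomExpansion s (-(f.eval s * w))
      obtain ⟨l, hl⟩ := f.derivative.evalSubFactor s a
      have taylor : f.eval (s - f.eval s * w) = f.eval s *
          ((1 - f.derivative.eval a * w) - l * w * (s - a) + k * w ^ 2 * f.eval s) := by
        rw [sub_eq_add_neg, hk]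
        linear_combination -f.eval s * w * hl
      rw [taylor, pow_succ _ (n + 1)]
      exact Ideal.mul_mem_mul hfs (add_mem (sub_mem hw (J.mul_mem_left _ hs))
        (J.mul_mem_left _ hfsJ))

theorem exists_isRoot_sub_mem [IsAdicComplete J S] {f : S[X]} {a w : S} (ha : f.eval a ∈ J)
    (hw : 1 - f.derivative.eval a * w ∈ J) : ∃ z, f.IsRoot z ∧ z - a ∈ J := by
  have hs := newtonSeq_sub_mem_and_eval_mem ha hw
  set s := newtonSeq f a w
  have cauchy : AdicCompletion.IsAdicCauchy J S s := by
    rw [AdicCompletion.isAdicCauchy_iff]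
    intro n
    rw [SModEq.sub_mem, smul_eq_mul, Ideal.mul_top]
    have step : s n - s (n + 1) = f.eval (s n) * w := sub_sub_cancel _ _
    rw [step]
    exact Ideal.pow_le_pow_right n.le_succ (Ideal.mul_mem_right _ _ (hs n).2)
  obtain ⟨z, hz⟩ := IsPrecomplete.prec (I := J) inferInstance cauchy
  simp only [SModEq.sub_mem, smul_eq_mul, Ideal.mul_top] at hz
  refine ⟨z, ?_, ?_⟩
  · refine IsHausdorff.haus (I := J) inferInstance _ fun n => ?_
    rw [SModEq.zero, smul_eq_mul, Ideal.mul_top]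
    have eval_sub_mem : f.eval (s n) - f.eval z ∈ J ^ n :=
      Ideal.mem_of_dvd _ (f.sub_dvd_eval_sub _ _) (hz n)
    have := sub_mem (Ideal.pow_le_pow_right n.le_succ (hs n).2) eval_sub_mem
    rwa [sub_sub_cancel] at this
  · have := sub_mem (hs 1).1 (by simpa only [pow_one] using hz 1)
    rwa [sub_sub_sub_cancel_left, ← neg_sub, neg_sub] at this

theorem exists_pow_eq_of_sub_one_mem [IsAdicComplete J S] {e : ℕ} (he : IsUnit (e : S)) {u : S}
    (hu : u - 1 ∈ J) : ∃ ρ, ρ ^ e = u := by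
  obtain ⟨w, hw⟩ := he.exists_right_inv
  obtain ⟨ρ, hρ, -⟩ := exists_isRoot_sub_mem (J := J) (f := X ^ e - C u) (a := 1) (w := w)
    (by simpa using neg_mem hu)
    (by simp [derivative_X_pow, hw])
  exact ⟨ρ, by simpa [sub_eq_zero] using hρ⟩

theorem exists_comp_C_add_C_mul_X_eq (f : S[X]) (a b : S) :
    ∃ q, f.comp (C a + C b * X) =
      C (f.eval a) + C (b * f.derivative.eval a) * X + C (b ^ 2) * (q * X ^ 2) := by
  obtain ⟨q, hq⟩ := (f.map C).binomExpansion (C a) (C b * X)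
  have hcomp : (f.map C).eval (C a + C b * X) = f.comp (C a + C b * X) := eval_map _ _
  refine ⟨q, ?_⟩
  rw [← hcomp, hq, derivative_map, eval_map, eval₂_at_apply, eval_map, eval₂_at_apply]
  simp only [C_mul, C_pow]
  ring

/-- Tougeron's form of Hensel's lemma. -/
theorem exists_isRoot_add_derivative_mul [IsAdicComplete J S] {g : S[X]} {a j : S} (hj : j ∈ J)
    (hg : g.eval a = g.derivative.eval a ^ 2 * j) :
    ∃ z ∈ J, g.IsRoot (a + g.derivative.eval a * z) ∧
      Associated (g.derivative.eval a) (g.derivative.eval (a + g.derivative.eval a * z)) := by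
  set d := g.derivative.eval a
  obtain ⟨q, hq⟩ := exists_comp_C_add_C_mul_X_eq g a d
  have expansion : g.comp (C a + C d * X) = C (d ^ 2) * (C j + X + q * X ^ 2) := by
    rw [hq, hg]
    simp only [C_mul, C_pow]
    ring
  obtain ⟨z, hz, hzJ⟩ := exists_isRoot_sub_mem (J := J) (f := C j + X + q * X ^ 2) (a := 0)
    (w := 1) (by simpa using hj) (by simp)
  rw [sub_zero] at hzJ
  refine ⟨z, hzJ, ?_, ?_⟩
  · have := congrArg (eval z) expansion
    rw [eval_mul, hz.eq_zero, mul_zero] at this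
    simpa [eval_comp] using this
  · obtain ⟨l, hl⟩ := g.derivative.evalSubFactor (a + d * z) a
    obtain ⟨u, hu⟩ := Ideal.mem_jacobson_bot.1 (IsAdicComplete.le_jacobson_bot J hzJ) l
    refine ⟨u, ?_⟩
    rw [hu]
    linear_combination -hl

end AdicNewton

section Krasner

variable {R S : Type*} [CommRing R] [CommRing S] [Algebra R S]

theorem aeval_mem_map_of_coeff_mem {I : Ideal R} {r : R[X]} (hr : ∀ i, r.coeff i ∈ I) (a : S) :
    aeval a r ∈ I.map (algebraMap R S) := by
  rw [aeval_eq_sum_range]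
  refine Ideal.sum_mem _ fun i _ => ?_
  rw [Algebra.smul_def]
  exact Ideal.mul_mem_right _ _ (Ideal.mem_map_of_mem _ (hr i))

theorem adjoin_singleton_eq_top_of_sub_mem [Module.Finite R S] {I : Ideal R}
    (hI : I ≤ Ideal.jacobson ⊥) {a b : S} (ha : Algebra.adjoin R {a} = ⊤)
    (hab : a - b ∈ I.map (algebraMap R S)) : Algebra.adjoin R {b} = ⊤ := by
  rw [← Algebra.toSubmodule_eq_top, eq_top_iff]
  refine Submodule.le_of_le_smul_of_le_jacobson_bot Module.Finite.fg_top hI fun s _ => ?_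
  obtain ⟨q, rfl⟩ : ∃ q : R[X], aeval a q = s := by
    simpa only [← AlgHom.mem_range, ← Algebra.adjoin_singleton_eq_range_aeval, ha]
      using Algebra.mem_top
  rw [← add_sub_cancel (aeval b q) (aeval a q)]
  refine Submodule.add_mem_sup (aeval_mem_adjoin_singleton R b) ?_
  rw [Ideal.smul_top_eq_map, Submodule.restrictScalars_mem]
  simp only [← eval_map_algebraMap]
  exact Ideal.mem_of_dvd _ (sub_dvd_eval_sub a b _) hab

theorem one_add_isUnit_of_mem_map [Module.Finite R S] {I : Ideal R} [IsNoetherianRing R]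
    [IsAdicComplete I R] {s : S} (hs : s ∈ I.map (algebraMap R S)) : IsUnit (1 + s) := by
  have := isAdicComplete_map_algebraMap_of_finite (S := S) I
  have hjac := IsAdicComplete.le_jacobson_bot (I.map (algebraMap R S)) hs
  simpa [add_comm] using Ideal.mem_jacobson_bot.1 hjac 1

variable [IsNoetherianRing R] {I : Ideal R} [IsAdicComplete I R]

theorem exists_aeval_eq_zero_sub_mem_of_sub_eq [Module.Finite R S] {f r : R[X]} {a b : S} {δ : R}
    (ha : aeval a f = 0) (hδ : b * aeval a (derivative f) = algebraMap R S δ)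
    (hr : ∀ i, r.coeff i ∈ I) :
    ∃ z : S, aeval z (f + C (δ ^ 2) * r) = 0 ∧ a - z ∈ I.map (algebraMap R S) ∧
      Associated (aeval a (derivative f)) (aeval z (derivative (f + C (δ ^ 2) * r))) := by
  have := isAdicComplete_map_algebraMap_of_finite (S := S) I
  set g := f + C (δ ^ 2) * r with hg
  set d := aeval a (derivative f) with hd
  have hr' : ∀ i, (derivative r).coeff i ∈ I := fun i => by
    rw [coeff_derivative]
    exact I.mul_mem_right _ (hr _)
  obtain ⟨u, hu⟩ := one_add_isUnit_of_mem_map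
    (Ideal.mul_mem_left _ (b ^ 2 * d) (aeval_mem_map_of_coeff_mem hr' a))
  have derivative_eval : aeval a (derivative g) = d * u := by
    rw [hg, derivative_add, derivative_C_mul, hu]
    simp only [map_add, map_mul, aeval_C, map_pow, ← hδ, ← hd]
    ring
  have g_eval : aeval a g =
      aeval a (derivative g) ^ 2 * ((b * ↑u⁻¹) ^ 2 * aeval a r) := by
    rw [derivative_eval]
    simp only [hg, map_add, ha, map_mul, aeval_C, map_pow, ← hδ, zero_add]
    linear_combination (-(b * d) ^ 2 * aeval a r * (1 + u * ↑u⁻¹)) * u.mul_inv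
  obtain ⟨z, hz, hroot, hassoc⟩ := exists_isRoot_add_derivative_mul
    (g := g.map (algebraMap R S)) (a := a)
    (Ideal.mul_mem_left _ ((b * ↑u⁻¹) ^ 2) (aeval_mem_map_of_coeff_mem hr a))
    (by simpa only [derivative_map, eval_map_algebraMap] using g_eval)
  simp only [IsRoot, derivative_map, eval_map_algebraMap] at hroot hassoc
  refine ⟨_, hroot, ?_, .trans ⟨u, derivative_eval.symm⟩ hassoc⟩
  rw [sub_add_cancel_left]
  exact neg_mem (Ideal.mul_mem_left _ _ hz)

/-- A form of Krasner's lemma: `δ` plays the role of the different of `R[y]`. -/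
theorem exists_aeval_eq_zero_adjoin_eq {f r : R[X]} {y b : S} {δ : R} (hf : f.Monic)
    (hy : aeval y f = 0) (hb : b ∈ Algebra.adjoin R {y})
    (hδ : b * aeval y (derivative f) = algebraMap R S δ) (hr : ∀ i, r.coeff i ∈ I) :
    ∃ z : S, aeval z (f + C (δ ^ 2) * r) = 0 ∧
      Algebra.adjoin R {z} = Algebra.adjoin R {y} ∧
      Associated (aeval y (derivative f)) (aeval z (derivative (f + C (δ ^ 2) * r))) := by
  have : Module.Finite R (Algebra.adjoin R {y}) :=
    Algebra.finite_adjoin_simple_of_isIntegral ⟨f, hf, hy⟩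
  let Y : Algebra.adjoin R {y} := ⟨y, Algebra.self_mem_adjoin_singleton R y⟩
  obtain ⟨Z, hZ, hYZ, hassoc⟩ := exists_aeval_eq_zero_sub_mem_of_sub_eq (I := I) (f := f) (r := r)
    (a := Y) (b := ⟨b, hb⟩) (δ := δ)
    (Subtype.ext (by simpa [← Subalgebra.aeval_coe] using hy))
    (Subtype.ext (by simpa [← Subalgebra.aeval_coe] using hδ)) hr
  have adjoin_eq {W : Algebra.adjoin R {y}} :
      (Algebra.adjoin R {W}).map (Subalgebra.val _) = Algebra.adjoin R {(W : S)} := by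
    rw [AlgHom.map_adjoin, Set.image_singleton, Subalgebra.coe_val]
  have adjoin_Y : Algebra.adjoin R {Y} = ⊤ := by
    apply Subalgebra.map_injective (f := Subalgebra.val _) Subtype.val_injective
    rw [adjoin_eq, Algebra.map_top, Subalgebra.range_val]
  refine ⟨Z, by rw [Subalgebra.aeval_coe, hZ, ZeroMemClass.coe_zero], ?_, ?_⟩
  · rw [← adjoin_eq, adjoin_singleton_eq_top_of_sub_mem (IsAdicComplete.le_jacobson_bot I)
      adjoin_Y hYZ, Algebra.map_top, Subalgebra.range_val]
  · change Associated (aeval (Y : S) (derivative f)) _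
    simpa only [Subalgebra.aeval_coe, Subalgebra.coe_val] using
      hassoc.map (Subalgebra.val (Algebra.adjoin R {y}))

theorem exists_unit_pow_eq_one_add {y s : S} (hy : IsIntegral R y) {e : ℕ} (he0 : e ≠ 0)
    (he : IsUnit (e : R)) {x : R} (hx : x ∈ I) (hs : s ∈ Algebra.adjoin R {y}) :
    ∃ ρ : Sˣ, (ρ : S) ^ e = 1 + algebraMap R S x * s := by
  have : Module.Finite R (Algebra.adjoin R {y}) := Algebra.finite_adjoin_simple_of_isIntegral hy
  have := isAdicComplete_map_algebraMap_of_finite (S := Algebra.adjoin R {y}) I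
  set t : Algebra.adjoin R {y} := algebraMap R _ x * ⟨s, hs⟩
  have ht_mem : t ∈ I.map (algebraMap R _) := Ideal.mul_mem_right _ _ (Ideal.mem_map_of_mem _ hx)
  obtain ⟨ρ, hρ⟩ := exists_pow_eq_of_sub_one_mem (J := I.map (algebraMap R _)) (e := e)
    (by simpa using he.map (algebraMap R (Algebra.adjoin R {y}))) (u := 1 + t) (by simpa)
  have hρ_unit : IsUnit ρ := by
    rw [← isUnit_pow_iff he0, hρ]
    exact one_add_isUnit_of_mem_map ht_mem
  exact ⟨(hρ_unit.map (Subalgebra.val _)).unit, congrArg (Subalgebra.val _) hρ⟩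

end Krasner

section Scaling

theorem adjoin_singleton_eq_of_adjoin_singleton_eq {R A S : Type*} [CommSemiring R]
    [CommSemiring A] [Semiring S] [Algebra R A] [Algebra R S] [Algebra A S] [IsScalarTower R A S]
    {y z : S} (h : Algebra.adjoin R {y} = Algebra.adjoin R {z}) :
    Algebra.adjoin A {y} = Algebra.adjoin A {z} := by
  have le_of_eq {y z : S} (h : Algebra.adjoin R {y} = Algebra.adjoin R {z}) :
      Algebra.adjoin A {y} ≤ Algebra.adjoin A {z} := by
    have hyz : Algebra.adjoin R {z} ≤ (Algebra.adjoin A {z}).restrictScalars R :=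
      Algebra.adjoin_le (Set.singleton_subset_iff.2 (Algebra.self_mem_adjoin_singleton A z))
    exact Algebra.adjoin_le
      (Set.singleton_subset_iff.2 (hyz (h ▸ Algebra.self_mem_adjoin_singleton R y)))
  exact (le_of_eq h).antisymm (le_of_eq h.symm)

theorem adjoin_singleton_algebraMap_mul {A S : Type*} [CommSemiring A] [Semiring S] [Algebra A S]
    {a : A} (ha : IsUnit a) (y : S) :
    Algebra.adjoin A {algebraMap A S a * y} = Algebra.adjoin A {y} := by
  obtain ⟨a', ha'⟩ := ha.exists_left_inv
  apply le_antisymm <;> refine Algebra.adjoin_le (Set.singleton_subset_iff.2 ?_)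
  · exact mul_mem (Subalgebra.algebraMap_mem _ a) (Algebra.self_mem_adjoin_singleton A y)
  · have hy : y = algebraMap A S a' * (algebraMap A S a * y) := by
      rw [← mul_assoc, ← map_mul, ha', map_one, one_mul]
    have := mul_mem (Subalgebra.algebraMap_mem _ a')
      (Algebra.self_mem_adjoin_singleton A (algebraMap A S a * y))
    rwa [← hy] at this

theorem algebraMap_mul_aeval_derivative_scaleRoots {A S : Type*} [CommRing A] [CommRing S]
    [Algebra A S] (f : A[X]) (a : A) (y : S) :
    algebraMap A S a * aeval (algebraMap A S a * y) (derivative (f.scaleRoots a)) =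
      algebraMap A S a ^ f.natDegree * aeval y (derivative f) := by
  have hcomp : (f.scaleRoots a).comp (C a * X) = C (a ^ f.natDegree) * f := by
    simpa [comp] using scaleRoots_eval₂_mul (p := f) C X a
  have := congrArg (fun q => aeval y (derivative q)) hcomp
  simp only [derivative_C_mul] at this
  simpa [derivative_comp, aeval_comp] using this

variable {R A : Type*} [CommRing R] [CommRing A] [Algebra R A] [Nontrivial A]
  (M : Submonoid R) [IsLocalization M A]

theorem exists_monic_map_eq_scaleRoots {f : A[X]} (hf : f.Monic) :
    ∃ d ∈ M, ∀ w, d ∣ w → ∃ g : R[X], g.Monic ∧ g.natDegree = f.natDegree ∧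
      g.map (algebraMap R A) = f.scaleRoots (algebraMap R A w) := by
  set d := IsLocalization.commonDenom M f.support f.coeff
  have hlifts := IsLocalization.scaleRoots_commonDenom_mem_lifts M f
    (by rw [hf.leadingCoeff]; exact one_mem _)
  obtain ⟨g, hg, hg_deg, hg_monic⟩ :=
    lifts_and_natDegree_eq_and_monic hlifts ((monic_scaleRoots_iff _).2 hf)
  rw [natDegree_scaleRoots] at hg_deg
  refine ⟨d, d.2, ?_⟩
  rintro _ ⟨u, rfl⟩
  refine ⟨g.scaleRoots u, (monic_scaleRoots_iff _).2 hg_monic, by rw [natDegree_scaleRoots, hg_deg],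
    ?_⟩
  rw [map_scaleRoots _ _ _ (by simp [hg_monic.leadingCoeff]), hg, map_mul, scaleRoots_mul]

end Scaling

section WeierstrassApproximation

/-- The divisibility properties of `T[x] ⊆ T⟦x⟧` with respect to the prime `ϖ` that follow from the
Weierstrass preparation and division theorems: prime to `ϖ`, every element of `R` is associated
to an element of `P`, and every residue class in `R` is represented by an element of `P`. -/
structure HasWeierstrassApproximation (P : Type*) {R : Type*} [CommRing P] [CommRing R]
    [Algebra P R] (ϖ : R) : Prop where
  exists_associated : ∀ {d : R}, ¬ ϖ ∣ d → ∃ w : P, Associated d (algebraMap P R w)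
  surjective : ∀ {d : R}, ¬ ϖ ∣ d →
    Function.Surjective ((Ideal.Quotient.mk (Ideal.span {d})).comp (algebraMap P R))

section

variable {P R : Type*} [CommRing P] [CommRing R] [Algebra P R] {d : R}
  (hd : Function.Surjective ((Ideal.Quotient.mk (Ideal.span {d})).comp (algebraMap P R)))

include hd

theorem exists_degree_le_map_eq_add (f : R[X]) :
    ∃ (g : P[X]) (r : R[X]), g.degree ≤ f.degree ∧ g.map (algebraMap P R) = f + C d * r := by
  obtain ⟨g, hg, hg_deg⟩ := exists_degree_eq_of_mem_lifts
    (mem_lifts_of_surjective hd (f.map (Ideal.Quotient.mk (Ideal.span {d}))))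
  obtain ⟨r, hr⟩ : C d ∣ g.map (algebraMap P R) - f := by
    rw [C_dvd_iff_dvd_coeff]
    intro i
    rw [← Ideal.mem_span_singleton, ← Ideal.Quotient.eq_zero_iff_mem, ← coeff_map,
      Polynomial.map_sub, Polynomial.map_map, hg, sub_self, coeff_zero]
  exact ⟨g, r, hg_deg.trans_le degree_map_le, eq_add_of_sub_eq' hr⟩

theorem exists_monic_map_eq_add [Nontrivial R] {f : R[X]} (hf : f.Monic) :
    ∃ (g : P[X]) (r : R[X]), g.Monic ∧ g.natDegree = f.natDegree ∧
      g.map (algebraMap P R) = f + C d * r := by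
  have := (algebraMap P R).domain_nontrivial
  obtain ⟨g, r, hg, hr⟩ := exists_degree_le_map_eq_add hd f.eraseLead
  have hg_lt : g.degree < f.natDegree :=
    hg.trans_lt (degree_eq_natDegree hf.ne_zero ▸ degree_eraseLead_lt hf.ne_zero)
  refine ⟨X ^ f.natDegree + g, r, monic_X_pow_add hg_lt, ?_, ?_⟩
  · rw [natDegree_add_eq_left_of_degree_lt (by rwa [degree_X_pow]), natDegree_X_pow]
  · have herase := f.eraseLead_add_C_mul_X_pow
    rw [hf.leadingCoeff, C_1, one_mul] at herase
    rw [Polynomial.map_add, Polynomial.map_pow, map_X, hr]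
    linear_combination herase

end

end WeierstrassApproximation

section UnramifiedLayer

variable {P R A Q : Type*} [CommRing P] [CommRing R] [CommRing A] [CommRing Q]
  [Algebra P R] [Algebra R A] [Algebra R Q] [Algebra A Q] [Algebra P Q]
  [IsScalarTower R A Q] [IsScalarTower P R Q] {x ϖ : R}

theorem not_dvd_mul_of_mem_primeCompl [(Ideal.span {ϖ}).IsPrime] {d y : R}
    (hd : d ∈ (Ideal.span {ϖ}).primeCompl) (hy : ¬ ϖ ∣ y) : ¬ ϖ ∣ d * y := by
  rw [← Ideal.mem_span_singleton] at hy ⊢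
  exact Ideal.IsPrime.mul_notMem ‹_› hd hy

theorem exists_monic_aeval_eq_zero_over [Nontrivial A] (M : Submonoid R) [IsLocalization M A]
    {f : A[X]} {y : Q} (hf : f.Monic) (hy : aeval y f = 0) (hder : IsUnit (aeval y (derivative f)))
    (hgen : Algebra.adjoin A {y} = ⊤) :
    ∃ (g : R[X]) (z : Q), g.Monic ∧ g.natDegree = f.natDegree ∧ aeval z g = 0 ∧
      IsUnit (aeval z (derivative g)) ∧ Algebra.adjoin A {z} = ⊤ := by
  obtain ⟨w, hw, hscale⟩ := exists_monic_map_eq_scaleRoots M hf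
  obtain ⟨g, hg, hg_deg, hg_map⟩ := hscale w dvd_rfl
  have hwA : IsUnit (algebraMap R A w) := IsLocalization.map_units A ⟨w, hw⟩
  refine ⟨g, algebraMap A Q (algebraMap R A w) * y, hg, hg_deg, ?_, ?_, ?_⟩
  · rw [← aeval_map_algebraMap A, hg_map]
    exact scaleRoots_aeval_eq_zero hy
  · rw [← aeval_map_algebraMap A, ← derivative_map, hg_map]
    apply isUnit_of_mul_isUnit_right
    rw [algebraMap_mul_aeval_derivative_scaleRoots]
    exact ((hwA.map _).pow _).mul hder
  · rw [adjoin_singleton_algebraMap_mul hwA, hgen]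

theorem exists_algebraMap_mul_mem_adjoin (M : Submonoid R) [IsLocalization M A] {y : Q}
    (hgen : Algebra.adjoin A {y} = ⊤) (z : Q) :
    ∃ d : M, algebraMap R Q d * z ∈ Algebra.adjoin R {y} := by
  simpa only [Submonoid.smul_def, Algebra.smul_def] using
    multiple_mem_adjoin_of_mem_localization_adjoin (R' := A) M {y} z (hgen ▸ Algebra.mem_top)

theorem exists_aeval_eq_unit_pow_mul (M : Submonoid R) [IsLocalization M A] {y : Q}
    (hgen : Algebra.adjoin A {y} = ⊤) {e : ℕ} (he : e ≠ 0) (v : Q) :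
    ∃ (D : Qˣ) (q : R[X]), aeval y q = D ^ e * v := by
  obtain ⟨d, hd⟩ := exists_algebraMap_mul_mem_adjoin M hgen v
  obtain ⟨D, hD⟩ : IsUnit (algebraMap R Q d) := by
    rw [IsScalarTower.algebraMap_apply R A Q]
    exact (IsLocalization.map_units A d).map _
  refine ⟨D, ?_⟩
  rw [← AlgHom.mem_range, ← Algebra.adjoin_singleton_eq_range_aeval]
  obtain ⟨k, rfl⟩ := Nat.exists_eq_succ_of_ne_zero he
  rw [hD, pow_succ, mul_assoc]
  exact mul_mem (pow_mem (Subalgebra.algebraMap_mem _ _) k) hd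

variable [IsDomain R] [IsNoetherianRing R]
  [(Ideal.span {ϖ}).IsPrime] [IsLocalization.AtPrime A (Ideal.span {ϖ})]
  [IsAdicComplete (Ideal.span {x}) R] (hP : HasWeierstrassApproximation P ϖ) (hx : ¬ ϖ ∣ x)

include hP hx

theorem exists_monic_aeval_eq_zero_of_unit_derivative {f : A[X]} {y : Q}
    (hf : f.Monic) (hy : aeval y f = 0) (hder : IsUnit (aeval y (derivative f)))
    (hgen : Algebra.adjoin A {y} = ⊤) :
    ∃ (g : P[X]) (z : Q), g.Monic ∧ g.natDegree = f.natDegree ∧ aeval z g = 0 ∧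
      IsUnit (aeval z (derivative g)) ∧ Algebra.adjoin A {z} = ⊤ := by
  have : Nontrivial A := IsLocalization.AtPrime.nontrivial A (Ideal.span {ϖ})
  obtain ⟨f₁, y₁, hf₁, hdeg, hy₁, hder₁, hgen₁⟩ :=
    exists_monic_aeval_eq_zero_over (Ideal.span {ϖ}).primeCompl hf hy hder hgen
  obtain ⟨b, hb⟩ := hder₁.exists_left_inv
  obtain ⟨δ, hδ⟩ := exists_algebraMap_mul_mem_adjoin (Ideal.span {ϖ}).primeCompl hgen₁ b
  have hδb : algebraMap R Q δ * b * aeval y₁ (derivative f₁) = algebraMap R Q δ := by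
    rw [mul_assoc, hb, mul_one]
  obtain ⟨g, r, hg, hg_deg, hg_map⟩ := exists_monic_map_eq_add
    (hP.surjective (not_dvd_mul_of_mem_primeCompl (pow_mem δ.2 2) hx)) hf₁
  rw [C_mul, mul_assoc] at hg_map
  obtain ⟨z, hz, hadjoin, hassoc⟩ := exists_aeval_eq_zero_adjoin_eq (I := Ideal.span {x})
    (r := C x * r) hf₁ hy₁ hδ hδb fun i => by
      rw [coeff_C_mul]
      exact Ideal.mul_mem_right _ _ (Ideal.mem_span_singleton_self x)
  rw [← hg_map] at hz hassoc
  rw [derivative_map, aeval_map_algebraMap] at hassoc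
  rw [aeval_map_algebraMap] at hz
  exact ⟨g, z, hg, hg_deg.trans hdeg, hz, hassoc.isUnit hder₁,
    (adjoin_singleton_eq_of_adjoin_singleton_eq hadjoin).trans hgen₁⟩

theorem exists_unit_pow_eq_mul_aeval {f : P[X]} {y : Q} (hf : f.Monic) (hy : aeval y f = 0)
    (hgen : Algebra.adjoin A {y} = ⊤) {e : ℕ} (he : IsUnit (e : R)) (v : Qˣ) :
    ∃ (u : P[X]) (c : Qˣ), u.degree < f.degree ∧ (c : Q) ^ e = v * aeval y u := by
  have he0 : e ≠ 0 := by
    rintro rfl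
    simp at he
  have := (algebraMap P R).domain_nontrivial
  have hfR := hf.map (algebraMap P R)
  have hfR_root : aeval y (f.map (algebraMap P R)) = 0 := by rwa [aeval_map_algebraMap]
  obtain ⟨D, q, hq⟩ := exists_aeval_eq_unit_pow_mul (Ideal.span {ϖ}).primeCompl hgen he0 ↑v⁻¹
  set V : Qˣ := D ^ e * v⁻¹ with hV_def
  obtain ⟨d', hd'⟩ := exists_algebraMap_mul_mem_adjoin (Ideal.span {ϖ}).primeCompl hgen ↑V⁻¹
  obtain ⟨u, r, hu, hur⟩ := exists_degree_le_map_eq_add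
    (hP.surjective (not_dvd_mul_of_mem_primeCompl d'.2 hx)) (q %ₘ f.map (algebraMap P R))
  have aeval_u : aeval y u = V + algebraMap R Q (d' * x) * aeval y r := by
    rw [← aeval_map_algebraMap R, hur, map_add, map_mul, aeval_C,
      aeval_modByMonic_eq_self_of_root hfR_root, hq]
    rfl
  obtain ⟨ρ, hρ⟩ := exists_unit_pow_eq_one_add (I := Ideal.span {x}) ⟨_, hfR, hfR_root⟩ he0 he
    (Ideal.mem_span_singleton_self x) (mul_mem hd' (aeval_mem_adjoin_singleton R y (p := r)))
  refine ⟨u, D * ρ, (hu.trans_lt (degree_modByMonic_lt q hfR)).trans_eq (hf.degree_map _), ?_⟩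
  have hvV : (v : Q) * V = D ^ e := by
    rw [hV_def, Units.val_mul, mul_left_comm, v.mul_inv, mul_one, Units.val_pow_eq_pow_val]
  rw [Units.val_mul, mul_pow, hρ, aeval_u, ← hvV, map_mul]
  linear_combination (v : Q) * algebraMap R Q d' * algebraMap R Q x * aeval y r * V.mul_inv

end UnramifiedLayer

section TameHensel

variable {B k : Type*} [CommRing B] [CommRing k] {q : B →+* k}

theorem exists_map_eq_and_eval_mem_ker_pow (hq : Function.Surjective q) {f : B[X]} {a : B}
    (ha : q (f.eval a) = 0) (hder : IsUnit (q (f.derivative.eval a))) (N : ℕ) :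
    ∃ z, q z = q a ∧ f.eval z ∈ RingHom.ker q ^ N := by
  obtain ⟨w, hw⟩ := hder.exists_right_inv
  obtain ⟨w, rfl⟩ := hq w
  have hw' : 1 - f.derivative.eval a * w ∈ RingHom.ker q := by
    rw [RingHom.mem_ker, map_sub, map_mul, hw, map_one, sub_self]
  obtain ⟨hz, hfz⟩ := newtonSeq_sub_mem_and_eval_mem (RingHom.mem_ker.2 ha) hw' N
  exact ⟨_, (RingHom.sub_mem_ker_iff q).1 hz, Ideal.pow_le_pow_right N.le_succ hfz⟩

theorem map_comp_C_add_C_mul_X {b : B} (hb : q b = 0) (f : B[X]) (a : B) :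
    (f.comp (C a + C b * X)).map q = C (q (f.eval a)) := by
  obtain ⟨r, hr⟩ := exists_comp_C_add_C_mul_X_eq f a b
  rw [hr]
  simp [hb]

theorem exists_comp_C_add_C_mul_X_eq_C_mul {b : B} (hb : q b = 0) {f : B[X]} {a r : B}
    (hr : f.eval a = b * r) :
    ∃ g, f.comp (C a + C b * X) = C b * g ∧
      g.map q = C (q r) + C (q (f.derivative.eval a)) * X := by
  obtain ⟨t, ht⟩ := exists_comp_C_add_C_mul_X_eq f a b
  refine ⟨C r + C (f.derivative.eval a) * X + C b * (t * X ^ 2), ?_, ?_⟩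
  · rw [ht, hr]
    simp only [C_mul, C_pow]
    ring
  · simp [hb]

variable {π : B}

/-- Looking for the root in the form `a + π * s` with `f (a + π * s) = π * g s`, the equation
`g ^ e = v * u (a + π * s)` reads `(r + f'(a) * s) ^ e = c ^ e` modulo `π`, which has a simple
root. -/
theorem exists_eval_eq_mul_and_pow_sub_mul_mem (hq : Function.Surjective q)
    (hker : RingHom.ker q = Ideal.span {π}) {f u : B[X]} {v a c : B} {e : ℕ} (he : IsUnit (e : B))
    (ha : π ∣ f.eval a) (hder : IsUnit (q (f.derivative.eval a))) (hc : IsUnit (q c))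
    (hcv : q c ^ e = q (v * u.eval a)) (N : ℕ) :
    ∃ α ρ : B, q α = q a ∧ f.eval α = π * ρ ∧ q ρ = q c ∧ π ^ N ∣ ρ ^ e - v * u.eval α := by
  have hπ : q π = 0 := RingHom.mem_ker.1 (hker ▸ Ideal.mem_span_singleton_self π)
  obtain ⟨r, hr⟩ := ha
  obtain ⟨g, hg, hg_map⟩ := exists_comp_C_add_C_mul_X_eq_C_mul hπ hr
  set h := u.comp (C a + C π * X) with hh
  have q_eval (p : B[X]) (s : B) : q (p.eval s) = (p.map q).eval (q s) := by
    rw [eval_map, eval₂_at_apply]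
  obtain ⟨s₀, g_eval⟩ : ∃ s₀, q (g.eval s₀) = q c := by
    obtain ⟨w, hw⟩ := hder.exists_right_inv
    obtain ⟨s₀, hs₀⟩ := hq (w * (q c - q r))
    refine ⟨s₀, ?_⟩
    rw [q_eval, hg_map, hs₀, eval_add, eval_C, eval_mul, eval_C, eval_X, ← mul_assoc, hw, one_mul,
      add_sub_cancel]
  have eval_zero : q ((g ^ e - C v * h).eval s₀) = 0 := by
    rw [eval_sub, eval_pow, eval_mul, eval_C, map_sub, map_pow, g_eval, hcv, map_mul, map_mul,
      q_eval h, map_comp_C_add_C_mul_X hπ, eval_C, sub_self]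
  have derivative_eval : q ((derivative (g ^ e - C v * h)).eval s₀) =
      q e * q c ^ (e - 1) * q (f.derivative.eval a) := by
    rw [q_eval, ← derivative_map, Polynomial.map_sub, Polynomial.map_mul, Polynomial.map_pow,
      map_comp_C_add_C_mul_X hπ, map_C, ← C_mul, derivative_sub, derivative_C, sub_zero,
      derivative_pow, eval_mul, eval_mul, eval_pow, ← q_eval, g_eval, hg_map]
    simp
  obtain ⟨s, hs, hsN⟩ := exists_map_eq_and_eval_mem_ker_pow hq eval_zero
    (derivative_eval ▸ ((he.map q).mul (hc.pow _)).mul hder) N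
  rw [hker, Ideal.span_singleton_pow, Ideal.mem_span_singleton] at hsN
  refine ⟨a + π * s, g.eval s, ?_, ?_, ?_, ?_⟩
  · rw [map_add, map_mul, hπ, zero_mul, add_zero]
  · simpa [eval_comp] using congrArg (eval s) hg
  · rw [q_eval, hs, ← q_eval, g_eval]
  · simpa [hh, eval_comp] using hsN

theorem exists_aeval_eq_mul_and_pow_sub_mul_mem {P : Type*} [CommRing P] [Algebra P B]
    {f u : P[X]} {v : B} {e : ℕ} (he : IsUnit (e : B)) {y c : B ⧸ Ideal.span {π}}
    (hy : aeval y f = 0) (hder : IsUnit (aeval y (derivative f))) (hc : IsUnit c)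
    (hcv : c ^ e = Ideal.Quotient.mk _ v * aeval y u) (N : ℕ) :
    ∃ α ρ : B, Ideal.Quotient.mk _ α = y ∧ aeval α f = π * ρ ∧
      Ideal.Quotient.mk _ ρ = c ∧ π ^ N ∣ ρ ^ e - v * aeval α u := by
  obtain ⟨a, rfl⟩ := Ideal.Quotient.mk_surjective y
  obtain ⟨c, rfl⟩ := Ideal.Quotient.mk_surjective c
  have mod_aeval (p : P[X]) : aeval (Ideal.Quotient.mk (Ideal.span {π}) a) p =
      Ideal.Quotient.mk (Ideal.span {π}) (aeval a p) :=
    aeval_algHom_apply (Ideal.Quotient.mkₐ P (Ideal.span {π})) a p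
  rw [mod_aeval] at hy hder hcv
  rw [Ideal.Quotient.eq_zero_iff_mem, Ideal.mem_span_singleton] at hy
  simp only [← eval_map_algebraMap, ← derivative_map, ← map_mul] at hy hder hcv ⊢
  exact exists_eval_eq_mul_and_pow_sub_mul_mem Ideal.Quotient.mk_surjective Ideal.mk_ker he hy
    hder hc hcv N

end TameHensel

section Generator

variable {A B : Type*} [CommRing A] [CommRing B] [Algebra A B]

theorem exists_mem_pow_dvd_sub {S : Subalgebra A B} {π ρ : B} (hπρ : π * ρ ∈ S)
    (hρ : IsUnit (Ideal.Quotient.mk (Ideal.span {π}) ρ)) (hS : ∀ b, ∃ s ∈ S, π ∣ b - s) (i : ℕ)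
    (b : B) : ∃ s ∈ S, π ^ i ∣ b - s := by
  induction i generalizing b with
  | zero => exact ⟨0, zero_mem _, by simp⟩
  | succ i ih =>
    obtain ⟨s, hs, k, hk⟩ := ih b
    obtain ⟨ρ', hρ'⟩ := hρ.exists_left_inv
    obtain ⟨ρ', rfl⟩ := Ideal.Quotient.mk_surjective ρ'
    obtain ⟨s', hs', hks'⟩ := hS (ρ' ^ i * k)
    refine ⟨s + (π * ρ) ^ i * s', add_mem hs (mul_mem (pow_mem hπρ i) hs'), ?_⟩
    have remainder : b - (s + (π * ρ) ^ i * s') = π ^ i * (k - ρ ^ i * s') := by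
      rw [← sub_sub, hk]
      ring
    rw [remainder, pow_succ]
    refine mul_dvd_mul_left _ ?_
    rw [← Ideal.mem_span_singleton, ← Ideal.Quotient.eq] at hks' ⊢
    rw [map_mul, ← hks', map_mul, ← mul_assoc, map_pow, map_pow, ← mul_pow,
      mul_comm (Ideal.Quotient.mk _ ρ), hρ', one_pow, one_mul]

theorem subalgebra_eq_top_of_dvd_pow [Module.Finite A B] {S : Subalgebra A B} {ϖ : A} {π ρ : B}
    (hjac : ϖ ∈ Ideal.jacobson (⊥ : Ideal A)) {e : ℕ} (hϖ : algebraMap A B ϖ ∣ π ^ e)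
    (hπρ : π * ρ ∈ S) (hρ : IsUnit (Ideal.Quotient.mk (Ideal.span {π}) ρ))
    (hS : ∀ b, ∃ s ∈ S, π ∣ b - s) : S = ⊤ := by
  rw [← Algebra.toSubmodule_eq_top, eq_top_iff]
  refine Submodule.le_of_le_smul_of_le_jacobson_bot (I := Ideal.span {ϖ}) Module.Finite.fg_top
    ((Ideal.span_singleton_le_iff_mem _).2 hjac) fun b _ => ?_
  obtain ⟨s, hs, hbs⟩ := exists_mem_pow_dvd_sub hπρ hρ hS e b
  obtain ⟨k, hk⟩ := hϖ.trans hbs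
  rw [← Algebra.smul_def] at hk
  rw [eq_add_of_sub_eq' hk]
  exact Submodule.add_mem_sup hs
    (Submodule.smul_mem_smul (Ideal.mem_span_singleton_self _) Submodule.mem_top)

theorem adjoin_algebraMap_singleton_eq_top {F E : Type*} [Field F] [Algebra A F] [CommRing E]
    [Algebra B E] [Algebra F E] [Algebra A E] [IsScalarTower A F E] [IsScalarTower A B E]
    {M : Submonoid A} (hM : ∀ a ∈ M, algebraMap A F a ≠ 0)
    [IsLocalization (Algebra.algebraMapSubmonoid B M) E] {α : B}
    (hα : Algebra.adjoin A {α} = ⊤) : Algebra.adjoin F {algebraMap B E α} = ⊤ := by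
  have algebraMap_mem (b : B) : algebraMap B E b ∈ Algebra.adjoin F {algebraMap B E α} := by
    obtain ⟨q, rfl⟩ : ∃ q : A[X], aeval α q = b := by
      rw [← AlgHom.mem_range, ← Algebra.adjoin_singleton_eq_range_aeval, hα]
      exact Algebra.mem_top
    rw [← aeval_algebraMap_apply, ← aeval_map_algebraMap F]
    exact aeval_mem_adjoin_singleton F _
  refine eq_top_iff.2 fun z _ => ?_
  obtain ⟨b, ⟨_, a, ha, rfl⟩, hz⟩ :=
    IsLocalization.exists_mk'_eq (Algebra.algebraMapSubmonoid B M) z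
  have hzb : z = (algebraMap A F a)⁻¹ • algebraMap B E b := by
    rw [eq_inv_smul_iff₀ (hM a ha), algebraMap_smul, Algebra.smul_def,
      IsScalarTower.algebraMap_apply A B E, mul_comm, ← hz]
    exact IsLocalization.mk'_spec E b _
  rw [hzb]
  exact Subalgebra.smul_mem _ (algebraMap_mem b) _

variable [IsDomain A] [IsDiscreteValuationRing A] [IsDedekindDomain B] [Module.Finite A B]
  (F E : Type*) [Field F] [Algebra A F] [IsFractionRing A F] [Field E] [Algebra F E] [Algebra A E]
  [IsScalarTower A F E] [FiniteDimensional F E] [Algebra.IsSeparable F E] [Algebra B E]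
  [IsScalarTower A B E] [IsIntegralClosure B A E]

include F E

theorem exists_mul_aeval_derivative_minpoly_eq {ϖ : A} (hϖ : Irreducible ϖ) :
    ∃ N : ℕ, ∀ α : B, Algebra.adjoin A {α} = ⊤ →
      ∃ b, b * aeval α (derivative (minpoly A α)) = algebraMap A B (ϖ ^ N) := by
  have : IsFractionRing B E := IsIntegralClosure.isFractionRing_of_finite_extension A F E B
  have := IsIntegralClosure.isLocalization A F E B
  have : FaithfulSMul A E := FaithfulSMul.trans A F E
  have : FaithfulSMul A B := FaithfulSMul.of_field_isFractionRing A B F E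
  have different_ne_bot : differentIdeal A B ≠ ⊥ := by
    rw [Ne, ← FractionalIdeal.coeIdeal_inj (K := E), coeIdeal_differentIdeal A F]
    simp
  have comap_ne_bot : (differentIdeal A B).comap (algebraMap A B) ≠ ⊥ := by
    obtain ⟨z, hz, hz0⟩ := Submodule.exists_mem_ne_zero_of_ne_bot different_ne_bot
    exact Ideal.comap_ne_bot_of_integral_mem hz0 hz (Algebra.IsIntegral.isIntegral z)
  obtain ⟨N, hN⟩ := IsDiscreteValuationRing.ideal_eq_span_pow_irreducible comap_ne_bot hϖ
  refine ⟨N, fun α hα => ?_⟩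
  have pow_mem : algebraMap A B (ϖ ^ N) ∈ differentIdeal A B :=
    Ideal.mem_comap.1 (hN ▸ Ideal.mem_span_singleton_self _)
  have conductor_mul := conductor_mul_differentIdeal A F E α (adjoin_algebraMap_singleton_eq_top
    (M := nonZeroDivisors A) (fun a ha => IsFractionRing.to_map_ne_zero_of_mem_nonZeroDivisors ha)
    hα)
  rw [conductor_eq_top_of_adjoin_eq_top hα, Ideal.top_mul] at conductor_mul
  rw [conductor_mul, Ideal.mem_span_singleton'] at pow_mem
  exact pow_mem

end Generator

section ProductOfFields

variable {κ : Type*} [Field κ]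

theorem isSeparable_of_cast_finrank_ne_zero {L : Type*} [Field L] [Algebra κ L]
    (h : (Module.finrank κ L : κ) ≠ 0) : Algebra.IsSeparable κ L := by
  by_contra hsep
  apply h
  have htr := Algebra.trace_algebraMap (S := L) (1 : κ)
  rwa [Algebra.trace_eq_zero_of_not_isSeparable hsep, LinearMap.zero_apply, nsmul_one,
    eq_comm] at htr

theorem exists_adjoin_eq_top_and_trace_eq {L : Type*} [Field L] [Algebra κ L]
    (h : (Module.finrank κ L : κ) ≠ 0) (t : κ) :
    ∃ θ : L, Algebra.adjoin κ {θ} = ⊤ ∧ Algebra.trace κ L θ = t := by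
  have : FiniteDimensional κ L := FiniteDimensional.of_finrank_pos
    (Nat.pos_of_ne_zero fun h0 => h (by rw [h0, Nat.cast_zero]))
  have := isSeparable_of_cast_finrank_ne_zero h
  obtain ⟨θ, hθ⟩ := Field.exists_primitive_element κ L
  set c := (t - Algebra.trace κ L θ) / Module.finrank κ L
  refine ⟨θ + algebraMap κ L c, ?_, ?_⟩
  · have hmem : θ ∈ Algebra.adjoin κ {θ + algebraMap κ L c} := by
      simpa using sub_mem (Algebra.self_mem_adjoin_singleton κ (θ + algebraMap κ L c))
        (algebraMap_mem _ c)
    rw [eq_top_iff, ← IntermediateField.top_toSubalgebra, ← hθ,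
      IntermediateField.adjoin_simple_toSubalgebra_of_isAlgebraic
        (Algebra.IsAlgebraic.isAlgebraic θ)]
    exact Algebra.adjoin_singleton_le hmem
  · rw [map_add, Algebra.trace_algebraMap, nsmul_eq_mul, mul_div_cancel₀ _ h]
    ring

theorem trace_eq_neg_nextCoeff_minpoly {L : Type*} [Field L] [Algebra κ L] [FiniteDimensional κ L]
    {θ : L} (hθ : Algebra.adjoin κ {θ} = ⊤) :
    Algebra.trace κ L θ = -(minpoly κ θ).nextCoeff := by
  rw [trace_eq_finrank_mul_minpoly_nextCoeff,
    IntermediateField.adjoin_eq_top_of_algebra _ _ hθ, IntermediateField.finrank_top,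
    Nat.cast_one, one_mul]

theorem natDegree_minpoly_eq_finrank {L : Type*} [Field L] [Algebra κ L] [FiniteDimensional κ L]
    {θ : L} (hθ : Algebra.adjoin κ {θ} = ⊤) : (minpoly κ θ).natDegree = Module.finrank κ L := by
  rw [← IntermediateField.adjoin.finrank (.of_finite κ θ),
    IntermediateField.adjoin_eq_top_of_algebra _ _ hθ, IntermediateField.finrank_top']

theorem isCoprime_minpoly_of_ne {L L' : Type*} [Field L] [Algebra κ L] [Field L'] [Algebra κ L']
    {θ : L} {θ' : L'} (hθ : IsIntegral κ θ) (hθ' : IsIntegral κ θ')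
    (hne : minpoly κ θ ≠ minpoly κ θ') : IsCoprime (minpoly κ θ) (minpoly κ θ') :=
  ((minpoly.irreducible hθ).isCoprime_or_dvd _).resolve_right fun hdvd => hne <|
    eq_of_monic_of_associated (minpoly.monic hθ) (minpoly.monic hθ') <|
      (minpoly.irreducible hθ).associated_of_dvd (minpoly.irreducible hθ') hdvd

theorem adjoin_singleton_pi_eq_top {R ι : Type*} [CommRing R] [Finite ι] {L : ι → Type*}
    [∀ i, CommRing (L i)] [∀ i, Algebra R (L i)] {θ : ∀ i, L i} {f : ι → R[X]}
    (hroot : ∀ i, aeval (θ i) (f i) = 0) (hcop : Pairwise (Function.onFun IsCoprime f))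
    (hgen : ∀ i, Algebra.adjoin R {θ i} = ⊤) : Algebra.adjoin R {θ} = ⊤ := by
  refine eq_top_iff.2 fun z _ => ?_
  have hpoly : ∀ i, ∃ r : R[X], aeval (θ i) r = z i := fun i => by
    rw [← AlgHom.mem_range, ← Algebra.adjoin_singleton_eq_range_aeval, hgen]
    trivial
  choose r hr using hpoly
  obtain ⟨r', hr'⟩ := Ideal.quotientInfToPiQuotient_surj (I := fun i => Ideal.span {f i})
    (fun i j hij => (Ideal.isCoprime_span_singleton_iff _ _).2 (hcop hij))
    (fun i => Ideal.Quotient.mk _ (r i))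
  obtain ⟨r', rfl⟩ := Ideal.Quotient.mk_surjective r'
  rw [Algebra.adjoin_singleton_eq_range_aeval]
  refine ⟨r', funext fun i => ?_⟩
  have hri := congrFun hr' i
  rw [Ideal.quotientInfToPiQuotient_mk'] at hri
  obtain ⟨s, hs⟩ := Ideal.mem_span_singleton.1 (Ideal.Quotient.eq.1 hri)
  change aeval θ r' i = z i
  rw [aeval_pi_apply₂, ← hr i, ← sub_eq_zero, ← map_sub, hs, map_mul, hroot, zero_mul]

-- Primitive elements with distinct traces have pairwise coprime minimal polynomials.
theorem exists_separable_aeval_eq_zero_adjoin_pi_eq_top [Infinite κ] {ι : Type*} [Fintype ι]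
    {L : ι → Type*} [∀ i, Field (L i)] [∀ i, Algebra κ (L i)]
    (h : ∀ i, (Module.finrank κ (L i) : κ) ≠ 0) :
    ∃ (f : κ[X]) (θ : ∀ i, L i), f.Monic ∧ f.Separable ∧
      f.natDegree = ∑ i, Module.finrank κ (L i) ∧ aeval θ f = 0 ∧ Algebra.adjoin κ {θ} = ⊤ := by
  have : ∀ i, FiniteDimensional κ (L i) := fun i => FiniteDimensional.of_finrank_pos
    (Nat.pos_of_ne_zero fun h0 => h i (by rw [h0, Nat.cast_zero]))
  have := fun i => isSeparable_of_cast_finrank_ne_zero (h i)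
  let t : ι ↪ κ :=
    ((Fintype.equivFin ι).toEmbedding.trans Fin.valEmbedding).trans (Infinite.natEmbedding κ)
  choose θ hθ ht using fun i => exists_adjoin_eq_top_and_trace_eq (h i) (t i)
  have integral : ∀ i, IsIntegral κ (θ i) := fun i => .of_finite κ _
  have hcop : Pairwise (Function.onFun IsCoprime fun i => minpoly κ (θ i)) := fun i j hij =>
    isCoprime_minpoly_of_ne (integral i) (integral j) fun heq => hij <| t.injective <| by
      rw [← ht, ← ht, trace_eq_neg_nextCoeff_minpoly (hθ i), heq,
        trace_eq_neg_nextCoeff_minpoly (hθ j)]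
  refine ⟨∏ i, minpoly κ (θ i), θ, monic_prod_of_monic _ _ fun i _ => minpoly.monic (integral i),
    separable_prod hcop fun i => Algebra.IsSeparable.isSeparable κ (θ i), ?_, ?_,
    adjoin_singleton_pi_eq_top (fun i => minpoly.aeval κ (θ i)) hcop hθ⟩
  · rw [natDegree_prod_of_monic _ _ fun i _ => minpoly.monic (integral i)]
    exact Finset.sum_congr rfl fun i _ => natDegree_minpoly_eq_finrank (hθ i)
  · funext i
    rw [aeval_pi_apply₂, map_prod, Pi.zero_apply]
    exact Finset.prod_eq_zero (Finset.mem_univ i) (minpoly.aeval κ (θ i))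

theorem exists_monic_lift_aeval_eq_zero_adjoin_eq_top {A k Q : Type*} [CommRing A]
    [CommRing k] [Algebra A k] [CommRing Q] [Algebra A Q] [Algebra k Q] [IsScalarTower A k Q]
    (hsurj : Function.Surjective (algebraMap A k)) {f : k[X]} (hf : f.Monic) (hsep : f.Separable)
    {y : Q} (hy : aeval y f = 0) (hgen : Algebra.adjoin k {y} = ⊤) :
    ∃ f₁ : A[X], f₁.Monic ∧ f₁.natDegree = f.natDegree ∧ aeval y f₁ = 0 ∧
      IsUnit (aeval y (derivative f₁)) ∧ Algebra.adjoin A {y} = ⊤ := by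
  obtain ⟨f₁, rfl, hdeg, hmonic⟩ := lifts_and_natDegree_eq_and_monic
    ((mem_lifts f).2 (map_surjective _ hsurj f)) hf
  obtain ⟨a, b, hab⟩ := hsep
  refine ⟨f₁, hmonic, hdeg, by rwa [aeval_map_algebraMap] at hy, ?_, ?_⟩
  · have hy' := congrArg (aeval y) hab
    rw [map_add, map_mul, map_mul, hy, mul_zero, zero_add, map_one, derivative_map,
      aeval_map_algebraMap] at hy'
    exact .of_mul_eq_one_right _ hy'
  · refine eq_top_iff.2 fun z _ => ?_
    have hz : z ∈ Algebra.adjoin k {y} := hgen ▸ Algebra.mem_top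
    rw [Algebra.adjoin_singleton_eq_range_aeval] at hz ⊢
    obtain ⟨r, rfl⟩ := hz
    obtain ⟨r, rfl⟩ := map_surjective _ hsurj r
    exact ⟨r, (aeval_map_algebraMap k y r).symm⟩

end ProductOfFields

section GaloisRamification

open IsLocalRing

theorem isPrincipalIdealRing_of_finite_of_isLocalRing (A : Type*) {B : Type*} [CommRing A]
    [IsLocalRing A] [CommRing B] [IsDedekindDomain B] [Algebra A B] [Module.Finite A B] :
    IsPrincipalIdealRing B :=
  .of_finite_maximals <| (Algebra.QuasiFinite.finite_primesOver (maximalIdeal A)).subset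
    fun N (hN : N.IsMaximal) => ⟨hN.isPrime,
      ⟨(eq_maximalIdeal (Ideal.isMaximal_comap_of_isIntegral_of_isMaximal N)).symm⟩⟩

variable {A B : Type*} [CommRing A] [CommRing B] [Algebra A B]

theorem nonempty_quotient_algEquiv_pi_of_eq_prod {ι : Type*} [Fintype ι] {J : Ideal B}
    {I : ι → Ideal B} (hcop : Pairwise (Function.onFun IsCoprime I)) (hJ : J = ∏ i, I i) :
    Nonempty ((B ⧸ J) ≃ₐ[A] ∀ i, B ⧸ I i) := by
  have hinf : J = ⨅ i, I i := by
    rw [hJ, Ideal.prod_eq_iInf_of_pairwise_isCoprime fun i _ j _ hij => hcop hij]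
    simp only [Finset.mem_univ, iInf_pos]
  exact ⟨(Ideal.quotientEquivAlgOfEq A hinf).trans
    (AlgEquiv.ofRingEquiv (f := Ideal.quotientInfRingEquivPiQuotient I hcop) fun _ => rfl)⟩

variable [Module.Finite A B]

theorem map_eq_prod_primesOver_pow_ramificationIdxIn [IsDedekindDomain A] [IsDedekindDomain B]
    [FaithfulSMul A B] (G : Type*) [Group G] [Finite G] [MulSemiringAction G B]
    [IsGaloisGroup G A B] {𝔭 : Ideal A} [𝔭.IsMaximal] (h𝔭 : 𝔭 ≠ ⊥) [Fintype (𝔭.primesOver B)] :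
    𝔭.map (algebraMap A B) = (∏ I : 𝔭.primesOver B, I.1) ^ 𝔭.ramificationIdxIn B := by
  rw [Ideal.map_algebraMap_eq_finsetProd_pow h𝔭, ← Finset.prod_pow, ← Finset.prod_set_coe]
  refine Finset.prod_congr (by ext; simp) fun I _ => ?_
  rw [Ideal.ramificationIdxIn_eq_ramificationIdx 𝔭 I.1 G]

theorem finrank_quotient_primesOver_eq_inertiaDegIn (G : Type*) [Group G] [Finite G]
    [MulSemiringAction G B] [IsGaloisGroup G A B] (𝔭 : Ideal A) [𝔭.IsMaximal]
    (I : 𝔭.primesOver B) :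
    Module.finrank (A ⧸ 𝔭) (B ⧸ I.1) = 𝔭.inertiaDegIn B := by
  have : I.1.IsMaximal := Ideal.IsMaximal.of_liesOver_isMaximal I.1 𝔭
  rw [Ideal.inertiaDegIn_eq_inertiaDeg 𝔭 I.1 G, Ideal.inertiaDeg_eq_of_isMaximal 𝔭 I.1]

theorem exists_span_eq_prod_primesOver_and_eq_pow_mul [IsDomain A] [IsDiscreteValuationRing A]
    [IsDedekindDomain B] [FaithfulSMul A B] (G : Type*) [Group G] [Finite G]
    [MulSemiringAction G B] [IsGaloisGroup G A B] [Fintype ((maximalIdeal A).primesOver B)]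
    {ϖ : A} (hϖ : Irreducible ϖ) :
    ∃ (π : B) (v : Bˣ), Ideal.span {π} = ∏ I : (maximalIdeal A).primesOver B, I.1 ∧
      algebraMap A B ϖ = π ^ (maximalIdeal A).ramificationIdxIn B * v := by
  have := isPrincipalIdealRing_of_finite_of_isLocalRing A (B := B)
  obtain ⟨π, hπ⟩ := IsPrincipalIdealRing.principal
    (∏ I : (maximalIdeal A).primesOver B, I.1)
  have hass : Associated (π ^ (maximalIdeal A).ramificationIdxIn B) (algebraMap A B ϖ) := by
    rw [← Ideal.span_singleton_eq_span_singleton, ← Ideal.span_singleton_pow,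
      ← Ideal.submodule_span_eq, ← hπ,
      ← map_eq_prod_primesOver_pow_ramificationIdxIn G (IsDiscreteValuationRing.not_a_field A),
      hϖ.maximalIdeal_eq, Ideal.map_span, Set.image_singleton]
  obtain ⟨v, hv⟩ := hass
  exact ⟨π, v, hπ.symm, hv.symm⟩

attribute [local instance] Ideal.Quotient.field in
theorem exists_monic_aeval_eq_zero_adjoin_pi_primesOver_eq_top (G : Type*) [Group G] [Finite G]
    [MulSemiringAction G B] [IsGaloisGroup G A B] (𝔭 : Ideal A) [𝔭.IsMaximal] [Infinite (A ⧸ 𝔭)]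
    (hm : (𝔭.inertiaDegIn B : A ⧸ 𝔭) ≠ 0) :
    ∃ (f : A[X]) (θ : ∀ I : 𝔭.primesOver B, B ⧸ I.1), f.Monic ∧
      f.natDegree = (𝔭.primesOver B).ncard * 𝔭.inertiaDegIn B ∧ aeval θ f = 0 ∧
      IsUnit (aeval θ (derivative f)) ∧ Algebra.adjoin A {θ} = ⊤ := by
  have : Fintype (𝔭.primesOver B) := (Algebra.QuasiFinite.finite_primesOver 𝔭).fintype
  have hmax : ∀ I : 𝔭.primesOver B, I.1.IsMaximal := fun I =>
    Ideal.IsMaximal.of_liesOver_isMaximal I.1 𝔭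
  have hrank := finrank_quotient_primesOver_eq_inertiaDegIn (B := B) G 𝔭
  obtain ⟨f, θ, hf, hsep, hdeg, hθ, hgen⟩ := exists_separable_aeval_eq_zero_adjoin_pi_eq_top
    (κ := A ⧸ 𝔭) (L := fun I : 𝔭.primesOver B => B ⧸ I.1) fun I => by rwa [hrank]
  obtain ⟨f₁, hf₁, hdeg₁, hθ₁, hder, hgen₁⟩ :=
    exists_monic_lift_aeval_eq_zero_adjoin_eq_top (A := A) Ideal.Quotient.mk_surjective hf hsep
      hθ hgen
  refine ⟨f₁, θ, hf₁, ?_, hθ₁, hder, hgen₁⟩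
  rw [hdeg₁, hdeg, Finset.sum_congr rfl fun I _ => hrank I, Finset.sum_const, smul_eq_mul,
    Finset.card_univ, Set.fintypeCard_eq_ncard]

theorem exists_uniformizer_and_monic_adjoin_eq_top [IsDomain A] [IsDiscreteValuationRing A]
    [IsDedekindDomain B] [FaithfulSMul A B] (G : Type*) [Group G] [Finite G]
    [MulSemiringAction G B] [IsGaloisGroup G A B] {ϖ : A} (hϖ : Irreducible ϖ)
    [Infinite (A ⧸ maximalIdeal A)] (hG : (Nat.card G : A ⧸ maximalIdeal A) ≠ 0) :
    ∃ (e : ℕ) (π : B) (v : Bˣ) (f : A[X]) (y : B ⧸ Ideal.span {π}),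
      (e : A ⧸ maximalIdeal A) ≠ 0 ∧ algebraMap A B ϖ = π ^ e * v ∧ f.Monic ∧
      e * f.natDegree = Nat.card G ∧ aeval y f = 0 ∧ IsUnit (aeval y (derivative f)) ∧
      Algebra.adjoin A {y} = ⊤ := by
  set 𝔭 := maximalIdeal A
  have : Fintype (𝔭.primesOver B) := (Algebra.QuasiFinite.finite_primesOver 𝔭).fintype
  have hcard := Ideal.ncard_primesOver_mul_ramificationIdxIn_mul_inertiaDegIn 𝔭 B G
  rw [← hcard, Nat.cast_mul, Nat.cast_mul] at hG
  obtain ⟨-, he, hm⟩ : _ ∧ (𝔭.ramificationIdxIn B : A ⧸ 𝔭) ≠ 0 ∧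
      (𝔭.inertiaDegIn B : A ⧸ 𝔭) ≠ 0 :=
    ⟨left_ne_zero_of_mul hG, left_ne_zero_of_mul (right_ne_zero_of_mul hG),
      right_ne_zero_of_mul (right_ne_zero_of_mul hG)⟩
  obtain ⟨π, v, hspan, hπ⟩ := exists_span_eq_prod_primesOver_and_eq_pow_mul (B := B) G hϖ
  obtain ⟨f, θ, hf, hdeg, hθ, hder, hgen⟩ :=
    exists_monic_aeval_eq_zero_adjoin_pi_primesOver_eq_top G 𝔭 hm
  have hcop : Pairwise (Function.onFun IsCoprime fun I : 𝔭.primesOver B => I.1) := fun I J hIJ =>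
    have := Ideal.IsMaximal.of_liesOver_isMaximal I.1 𝔭
    have := Ideal.IsMaximal.of_liesOver_isMaximal J.1 𝔭
    Ideal.isCoprime_of_isMaximal fun h => hIJ (Subtype.ext h)
  obtain ⟨Φ⟩ := nonempty_quotient_algEquiv_pi_of_eq_prod (A := A) hcop hspan
  refine ⟨_, π, v, f, Φ.symm θ, he, hπ, hf, ?_, ?_, ?_, ?_⟩
  · rw [hdeg, ← hcard]
    ring
  · rw [aeval_algHom_apply, hθ, map_zero]
  · rw [aeval_algHom_apply]
    exact hder.map Φ.symm
  · rw [← Set.image_singleton, ← AlgEquiv.coe_toAlgHom, ← AlgHom.map_adjoin, hgen,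
      Algebra.map_top, AlgHom.range_eq_top]
    exact Φ.symm.surjective

end GaloisRamification

section Approximation

theorem degree_C_mul_le_degree {R : Type*} [Semiring R] (c : R) (q : R[X]) :
    (C c * q).degree ≤ q.degree := by
  rw [← smul_eq_C_mul]
  exact degree_smul_le c q

theorem exists_eq_minpoly_add_C_mul_of_dvd_aeval {A B : Type*} [CommRing A] [IsDomain A]
    [IsIntegrallyClosed A] [CommRing B] [IsDomain B] [Algebra A B] [Module.IsTorsionFree A B]
    {α : B} (hα : IsIntegral A α) (hgen : Algebra.adjoin A {α} = ⊤) {h : A[X]} (hh : h.Monic)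
    (hdeg : h.natDegree = (minpoly A α).natDegree) {c : A} (hdvd : algebraMap A B c ∣ aeval α h) :
    ∃ q : A[X], h = minpoly A α + C c * q := by
  obtain ⟨s, hs⟩ := hdvd
  obtain ⟨q, rfl⟩ : ∃ q : A[X], aeval α q = s := by
    rw [← AlgHom.mem_range, ← Algebra.adjoin_singleton_eq_range_aeval, hgen]
    exact Algebra.mem_top
  set r := q %ₘ minpoly A α
  have hr : aeval α (h - C c * r) = 0 := by
    rw [map_sub, map_mul, aeval_C, aeval_modByMonic_eq_self_of_root (minpoly.aeval A α), hs,
      sub_self]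
  have hr_deg : (C c * r).degree < h.degree := by
    rw [degree_eq_natDegree hh.ne_zero, hdeg, ← degree_eq_natDegree (minpoly.ne_zero hα)]
    exact (degree_C_mul_le_degree c r).trans_lt (degree_modByMonic_lt q (minpoly.monic hα))
  refine ⟨r, eq_add_of_sub_eq ?_⟩
  refine eq_of_monic_of_dvd_of_natDegree_le (minpoly.monic hα) (hh.sub_of_left hr_deg)
    (minpoly.isIntegrallyClosed_dvd hα hr) ?_
  rw [natDegree_eq_of_degree_eq (degree_sub_eq_left_of_degree_lt hr_deg), hdeg]

variable {P R A B : Type*} [CommRing P] [CommRing R] [IsDomain R] [CommRing A] [CommRing B]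
  [Algebra P R] [Algebra R A] {x ϖ : R}

theorem pow_dvd_of_algebraMap_pow_dvd_algebraMap (hϖ : Prime ϖ) [(Ideal.span {ϖ}).IsPrime]
    [IsLocalization.AtPrime A (Ideal.span {ϖ})] {N : ℕ} {r : R}
    (h : algebraMap R A (ϖ ^ N) ∣ algebraMap R A r) : ϖ ^ N ∣ r := by
  obtain ⟨z, hz⟩ := h
  obtain ⟨⟨s, m⟩, hs⟩ := IsLocalization.surj (Ideal.span {ϖ}).primeCompl z
  have hm : ¬ ϖ ∣ m := fun hdvd => m.2 (Ideal.mem_span_singleton.2 hdvd)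
  refine hϖ.pow_dvd_of_dvd_mul_left N hm ⟨s, ?_⟩
  apply IsLocalization.injective A (Ideal.span {ϖ}).primeCompl_le_nonZeroDivisors
  rw [map_mul, map_mul, hz, ← hs]
  ring

theorem exists_map_scaleRoots_eq_add_C_pow_mul (hP : HasWeierstrassApproximation P ϖ)
    (hϖ : Prime ϖ) [(Ideal.span {ϖ}).IsPrime] [IsLocalization.AtPrime A (Ideal.span {ϖ})]
    {f q : A[X]} {h : P[X]} {N : ℕ} (hf : f.Monic) (hdeg : h.natDegree = f.natDegree)
    (hq : (h.map (algebraMap P R)).map (algebraMap R A) = f + C (algebraMap R A (ϖ ^ N)) * q) :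
    ∃ (w : P) (G r : R[X]), IsUnit (algebraMap R A (algebraMap P R w)) ∧ G.Monic ∧
      G.natDegree = f.natDegree ∧
      G.map (algebraMap R A) = f.scaleRoots (algebraMap R A (algebraMap P R w)) ∧
      (h.scaleRoots w).map (algebraMap P R) = G + C (ϖ ^ N) * r := by
  have : Nontrivial A := IsLocalization.AtPrime.nontrivial A (Ideal.span {ϖ})
  obtain ⟨d, hd, hscale⟩ := exists_monic_map_eq_scaleRoots (Ideal.span {ϖ}).primeCompl hf
  obtain ⟨w, hw⟩ := hP.exists_associated fun hdvd => hd (Ideal.mem_span_singleton.2 hdvd)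
  obtain ⟨G, hG, hGdeg, hGmap⟩ := hscale _ hw.dvd
  obtain ⟨r, hr⟩ : C (ϖ ^ N) ∣ (h.scaleRoots w).map (algebraMap P R) - G := by
    rw [C_dvd_iff_dvd_coeff]
    intro i
    apply pow_dvd_of_algebraMap_pow_dvd_algebraMap (A := A) hϖ
    have hqi := congrArg (coeff · i) hq
    simp only [coeff_map, coeff_add, coeff_C_mul] at hqi
    refine ⟨q.coeff i * algebraMap R A (algebraMap P R w) ^ (f.natDegree - i), ?_⟩
    rw [coeff_sub, map_sub, ← coeff_map (algebraMap R A) (p := G), hGmap, coeff_map,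
      coeff_scaleRoots, coeff_scaleRoots, hdeg, map_mul, map_mul, hqi,
      map_pow (algebraMap P R), map_pow (algebraMap R A) (algebraMap P R w)]
    ring
  refine ⟨w, G, r, ?_, hG, hGdeg, hGmap, eq_add_of_sub_eq' hr⟩
  have hdA : IsUnit (algebraMap R A d) :=
    IsLocalization.map_units A (⟨d, hd⟩ : (Ideal.span {ϖ}).primeCompl)
  exact (hw.map (algebraMap R A)).isUnit hdA

theorem degree_lt_of_eq_add_C_mul {f g r : R[X]} (hf : f.Monic) (hg : g.Monic)
    (hdeg : g.natDegree = f.natDegree) {c : R} (hc : c ≠ 0) (h : g = f + C c * r) :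
    r.degree < f.degree := by
  have hfg : g.degree = f.degree := by
    rw [degree_eq_natDegree hf.ne_zero, degree_eq_natDegree hg.ne_zero, hdeg]
  rw [← degree_C_mul hc, ← sub_eq_of_eq_add' h, ← hfg]
  exact degree_sub_lt_left hfg hg.ne_zero (by rw [hg.leadingCoeff, hf.leadingCoeff])

variable [IsNoetherianRing R] [(Ideal.span {ϖ}).IsPrime]
  [IsLocalization.AtPrime A (Ideal.span {ϖ})] [IsAdicComplete (Ideal.span {x}) R]
  [Algebra A B] [Algebra R B] [Algebra P B] [IsScalarTower R A B] [IsScalarTower P R B]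

theorem exists_monic_aeval_eq_zero_of_eq_add_C_pow_mul (hP : HasWeierstrassApproximation P ϖ)
    (hx : ¬ ϖ ∣ x) {ϖ₀ : P} (hϖ₀ : algebraMap P R ϖ₀ = ϖ) {G r : R[X]} {h : P[X]} {N : ℕ}
    (hϖ : ϖ ≠ 0) (hG : G.Monic) (hh : h.Monic) (hdeg : h.natDegree = G.natDegree)
    (hr : h.map (algebraMap P R) = G + C (ϖ ^ (2 * N)) * r) {γ c : B} (hγ : aeval γ G = 0)
    (hgen : Algebra.adjoin A {γ} = ⊤)
    (hc : c * aeval γ (derivative G) = algebraMap R B (ϖ ^ N)) :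
    ∃ (g : P[X]) (z : B), g.Monic ∧ g.natDegree = h.natDegree ∧ aeval z g = 0 ∧
      Algebra.adjoin A {z} = ⊤ := by
  obtain ⟨d, hd⟩ := exists_algebraMap_mul_mem_adjoin (Ideal.span {ϖ}).primeCompl hgen c
  have hdx : ¬ ϖ ∣ (d : R) ^ 2 * x := not_dvd_mul_of_mem_primeCompl (pow_mem d.2 2) hx
  obtain ⟨r₀, s, hr₀, hs⟩ := exists_degree_le_map_eq_add (hP.surjective hdx) (-r)
  rw [degree_neg] at hr₀
  have hr_deg : r.degree < G.degree := degree_lt_of_eq_add_C_mul hG (hh.map _)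
    ((hh.natDegree_map _).trans hdeg) (pow_ne_zero _ hϖ) hr
  have hg_deg : (C (ϖ₀ ^ (2 * N)) * r₀).degree < h.degree := by
    have : Nontrivial P := (algebraMap P R).domain_nontrivial
    refine ((degree_C_mul_le_degree _ _).trans hr₀).trans_lt (hr_deg.trans_eq ?_)
    rw [degree_eq_natDegree hG.ne_zero, degree_eq_natDegree hh.ne_zero, hdeg]
  have hg_map : (h + C (ϖ₀ ^ (2 * N)) * r₀).map (algebraMap P R) =
      G + C ((d * ϖ ^ N) ^ 2) * (C x * s) := by
    rw [Polynomial.map_add, Polynomial.map_mul, map_C, hr, hs, map_pow (algebraMap P R), hϖ₀]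
    simp only [map_mul, map_pow]
    ring
  have hδ : algebraMap R B d * c * aeval γ (derivative G) = algebraMap R B (d * ϖ ^ N) := by
    rw [mul_assoc, hc, map_mul]
  obtain ⟨z, hz, hadjoin, -⟩ := exists_aeval_eq_zero_adjoin_eq (I := Ideal.span {x})
    (r := C x * s) hG hγ hd hδ fun i => by
      rw [coeff_C_mul]
      exact Ideal.mul_mem_right _ _ (Ideal.mem_span_singleton_self x)
  rw [← hg_map, aeval_map_algebraMap] at hz
  exact ⟨_, z, hh.add_of_left hg_deg,
    natDegree_eq_of_degree_eq (degree_add_eq_left_of_degree_lt hg_deg), hz,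
    (adjoin_singleton_eq_of_adjoin_singleton_eq hadjoin).trans hgen⟩

theorem exists_monic_aeval_eq_zero_of_pow_dvd_aeval [IsDomain A] [IsIntegrallyClosed A]
    [IsDomain B] [Module.Finite A B] [Module.IsTorsionFree A B]
    (hP : HasWeierstrassApproximation P ϖ) (hx : ¬ ϖ ∣ x) {ϖ₀ : P} (hϖ₀ : algebraMap P R ϖ₀ = ϖ)
    (hϖ : ϖ ≠ 0) {α c : B} (hgen : Algebra.adjoin A {α} = ⊤) {N : ℕ}
    (hc : c * aeval α (derivative (minpoly A α)) = algebraMap R B (ϖ ^ N)) {h : P[X]}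
    (hh : h.Monic) (hdeg : h.natDegree = (minpoly A α).natDegree)
    (hdvd : algebraMap R B (ϖ ^ (2 * N)) ∣ aeval α h) :
    ∃ (g : P[X]) (z : B), g.Monic ∧ g.natDegree = h.natDegree ∧ aeval z g = 0 ∧
      Algebra.adjoin A {z} = ⊤ := by
  have hα : IsIntegral A α := Algebra.IsIntegral.isIntegral α
  have : Nontrivial P := (algebraMap P R).domain_nontrivial
  obtain ⟨q, hq⟩ := exists_eq_minpoly_add_C_mul_of_dvd_aeval hα hgen
    ((hh.map (algebraMap P R)).map (algebraMap R A))
    (by rw [(hh.map _).natDegree_map, hh.natDegree_map, hdeg])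
    (c := algebraMap R A (ϖ ^ (2 * N)))
    (by rwa [← IsScalarTower.algebraMap_apply, aeval_map_algebraMap, aeval_map_algebraMap])
  obtain ⟨w, G, r, hw, hG, hGdeg, hGmap, hr⟩ := exists_map_scaleRoots_eq_add_C_pow_mul hP
    ((Ideal.span_singleton_prime hϖ).1 inferInstance) (minpoly.monic hα) hdeg hq
  set a := algebraMap R A (algebraMap P R w)
  obtain ⟨a', ha'⟩ := hw.exists_left_inv
  have hγ : aeval (algebraMap A B a * α) G = 0 := by
    rw [← aeval_map_algebraMap A, hGmap]
    exact scaleRoots_aeval_eq_zero (minpoly.aeval A α)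
  have hder : algebraMap A B a' ^ (minpoly A α).natDegree * algebraMap A B a * c *
      aeval (algebraMap A B a * α) (derivative G) = algebraMap R B (ϖ ^ N) := by
    have haa' : algebraMap A B a' * algebraMap A B a = 1 := by rw [← map_mul, ha', map_one]
    have hscale := algebraMap_mul_aeval_derivative_scaleRoots (minpoly A α) a α
    rw [← aeval_map_algebraMap A, ← derivative_map, hGmap, ← hc, ← one_mul (c * _),
      ← one_pow (minpoly A α).natDegree, ← haa', mul_pow]
    linear_combination algebraMap A B a' ^ (minpoly A α).natDegree * c * hscale
  obtain ⟨g, z, hg, hgdeg, hz, hz_gen⟩ := exists_monic_aeval_eq_zero_of_eq_add_C_pow_mul hP hx hϖ₀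
    hϖ hG (monic_scaleRoots_iff (s := w) |>.2 hh) (by rw [natDegree_scaleRoots, hdeg, hGdeg]) hr hγ
    ((adjoin_singleton_algebraMap_mul hw α).trans hgen) hder
  exact ⟨g, z, hg, hgdeg.trans (natDegree_scaleRoots _ _), hz, hz_gen⟩

end Approximation

section TameGenerator

variable {P R A B : Type*} [CommRing P] [CommRing R] [CommRing A] [CommRing B]
  [Algebra P R] [Algebra R A] [Algebra A B] [Algebra R B] [Algebra P B]
  [IsScalarTower R A B] [IsScalarTower P R B]

theorem exists_mem_adjoin_singleton_dvd_sub {α π : B}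
    (hgen : Algebra.adjoin A {Ideal.Quotient.mk (Ideal.span {π}) α} = ⊤) (b : B) :
    ∃ s ∈ Algebra.adjoin A {α}, π ∣ b - s := by
  have himage : (Algebra.adjoin A {α}).map (Ideal.Quotient.mkₐ A (Ideal.span {π})) = ⊤ := by
    rw [AlgHom.map_adjoin, Set.image_singleton]
    exact hgen
  obtain ⟨s, hs, hsb⟩ : Ideal.Quotient.mk (Ideal.span {π}) b ∈
      (Algebra.adjoin A {α}).map (Ideal.Quotient.mkₐ A (Ideal.span {π})) :=
    himage ▸ Algebra.mem_top
  exact ⟨s, hs, Ideal.mem_span_singleton.1 (Ideal.Quotient.eq.1 hsb.symm)⟩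

theorem exists_adjoin_eq_top_and_pow_dvd_aeval_pow_sub [Module.Finite A B] {ϖ : R} {ϖ₀ : P}
    (hϖ₀ : algebraMap P R ϖ₀ = ϖ) (hjac : algebraMap R A ϖ ∈ Ideal.jacobson (⊥ : Ideal A))
    {π v : B} {e : ℕ} (he : IsUnit (e : B)) (hv : IsUnit v) (hϖ : algebraMap R B ϖ = π ^ e * v)
    {f u : P[X]} {y c : B ⧸ Ideal.span {π}} (hy : aeval y f = 0)
    (hder : IsUnit (aeval y (derivative f))) (hgen : Algebra.adjoin A {y} = ⊤) (hc : IsUnit c)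
    (hcv : c ^ e = Ideal.Quotient.mk _ v * aeval y u) (N : ℕ) :
    ∃ α : B, Algebra.adjoin A {α} = ⊤ ∧ π ^ N ∣ aeval α (f ^ e - C ϖ₀ * u) := by
  obtain ⟨α, ρ, rfl, hαf, rfl, hN⟩ := exists_aeval_eq_mul_and_pow_sub_mul_mem he hy hder hc hcv N
  refine ⟨α, ?_, ?_⟩
  · refine subalgebra_eq_top_of_dvd_pow hjac (e := e) ?_ ?_ hc
      (exists_mem_adjoin_singleton_dvd_sub hgen)
    · rw [← IsScalarTower.algebraMap_apply, hϖ]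
      exact hv.mul_right_dvd.2 dvd_rfl
    · rw [← hαf, ← aeval_map_algebraMap R, ← aeval_map_algebraMap A]
      exact aeval_mem_adjoin_singleton A α
  · have haeval : aeval α (f ^ e - C ϖ₀ * u) = π ^ e * (ρ ^ e - v * aeval α u) := by
      rw [map_sub, map_pow, map_mul, aeval_C, hαf, IsScalarTower.algebraMap_apply P R B, hϖ₀, hϖ]
      ring
    exact haeval ▸ hN.mul_left _

theorem monic_pow_sub_C_mul_and_natDegree_eq {R : Type*} [CommRing R] {f u : R[X]}
    (hf : f.Monic) (hu : u.degree < f.degree) {e : ℕ} (he : e ≠ 0) (a : R) :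
    (f ^ e - C a * u).Monic ∧ (f ^ e - C a * u).natDegree = e * f.natDegree := by
  nontriviality R
  have hdeg : (C a * u).degree < (f ^ e).degree := by
    refine (degree_C_mul_le_degree a u).trans_lt (hu.trans_le ?_)
    rw [degree_eq_natDegree hf.ne_zero, degree_eq_natDegree (hf.pow e).ne_zero, hf.natDegree_pow]
    exact_mod_cast Nat.le_mul_of_pos_left _ (Nat.pos_of_ne_zero he)
  refine ⟨(hf.pow e).sub_of_left hdeg, ?_⟩
  rw [natDegree_eq_of_degree_eq (degree_sub_eq_left_of_degree_lt hdeg), hf.natDegree_pow]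

variable [IsDomain R] [IsNoetherianRing R] {x ϖ : R} [(Ideal.span {ϖ}).IsPrime]
  [IsLocalization.AtPrime A (Ideal.span {ϖ})] [IsAdicComplete (Ideal.span {x}) R]
  [IsDomain A] [IsDiscreteValuationRing A] [IsDedekindDomain B] [Module.Finite A B]
  [Infinite (A ⧸ IsLocalRing.maximalIdeal A)]

theorem exists_monic_adjoin_eq_top_and_pow_dvd_aeval [FaithfulSMul A B]
    (G : Type*) [Group G] [Finite G] [MulSemiringAction G B] [IsGaloisGroup G A B]
    (hP : HasWeierstrassApproximation P ϖ) (hx : ¬ ϖ ∣ x) {ϖ₀ : P} (hϖ₀ : algebraMap P R ϖ₀ = ϖ)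
    (hϖ : Irreducible (algebraMap R A ϖ))
    (hunit : ∀ e : ℕ, (e : A ⧸ IsLocalRing.maximalIdeal A) ≠ 0 → IsUnit (e : R))
    (hG : (Nat.card G : A ⧸ IsLocalRing.maximalIdeal A) ≠ 0) (N : ℕ) :
    ∃ (α : B) (h : P[X]), Algebra.adjoin A {α} = ⊤ ∧ h.Monic ∧ h.natDegree = Nat.card G ∧
      algebraMap R B (ϖ ^ N) ∣ aeval α h := by
  obtain ⟨e, π, v, f₁, y₁, he, hπ, hf₁, hef₁, hy₁, hder₁, hgen₁⟩ :=
    exists_uniformizer_and_monic_adjoin_eq_top (B := B) G hϖ hG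
  have heR : IsUnit (e : R) := hunit e he
  have he0 : e ≠ 0 := by
    rintro rfl
    simp at he
  rw [← IsScalarTower.algebraMap_apply] at hπ
  obtain ⟨f, y, hf, hff₁, hy, hder, hgen⟩ :=
    exists_monic_aeval_eq_zero_of_unit_derivative hP hx hf₁ hy₁ hder₁ hgen₁
  obtain ⟨u, c, hu, hcv⟩ := exists_unit_pow_eq_mul_aeval hP hx hf hy hgen heR
    (v.isUnit.map (Ideal.Quotient.mk (Ideal.span {π}))).unit
  have hjac : algebraMap R A ϖ ∈ Ideal.jacobson (⊥ : Ideal A) := by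
    rw [IsLocalRing.jacobson_eq_maximalIdeal _ bot_ne_top, hϖ.maximalIdeal_eq]
    exact Ideal.mem_span_singleton_self _
  obtain ⟨α, hα, hdvd⟩ := exists_adjoin_eq_top_and_pow_dvd_aeval_pow_sub hϖ₀ hjac
    (by simpa using heR.map (algebraMap R B)) v.isUnit hπ hy hder hgen c.isUnit hcv (e * N)
  obtain ⟨hmonic, hdeg⟩ := monic_pow_sub_C_mul_and_natDegree_eq hf hu he0 ϖ₀
  refine ⟨α, _, hα, hmonic, by rw [hdeg, hff₁, hef₁], ?_⟩
  rw [map_pow, hπ, mul_pow, ← pow_mul]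
  exact (v.isUnit.pow N).mul_right_dvd.2 hdvd

theorem exists_monic_adjoin_eq_top_of_isGalois (F E : Type*) [Field F] [Algebra A F]
    [IsFractionRing A F] [Field E] [Algebra F E] [Algebra A E] [IsScalarTower A F E]
    [FiniteDimensional F E] [IsGalois F E] [Algebra B E] [IsScalarTower A B E]
    [IsIntegralClosure B A E] (hP : HasWeierstrassApproximation P ϖ) (hx : ¬ ϖ ∣ x) {ϖ₀ : P}
    (hϖ₀ : algebraMap P R ϖ₀ = ϖ) (hϖ : Irreducible (algebraMap R A ϖ))
    (hunit : ∀ e : ℕ, (e : A ⧸ IsLocalRing.maximalIdeal A) ≠ 0 → IsUnit (e : R))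
    (hFE : (Module.finrank F E : A ⧸ IsLocalRing.maximalIdeal A) ≠ 0) :
    ∃ (g : P[X]) (β : B), g.Monic ∧ g.natDegree = Module.finrank F E ∧ aeval β g = 0 ∧
      Algebra.adjoin F {algebraMap B E β} = ⊤ := by
  have : IsFractionRing B E := IsIntegralClosure.isFractionRing_of_finite_extension A F E B
  have := IsIntegralClosure.isLocalization A F E B
  have : FaithfulSMul A E := FaithfulSMul.trans A F E
  have : FaithfulSMul A B := FaithfulSMul.of_field_isFractionRing A B F E
  let : MulSemiringAction Gal(E/F) B := IsIntegralClosure.MulSemiringAction A F E B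
  have : IsGaloisGroup Gal(E/F) A B := IsGaloisGroup.of_isFractionRing _ _ _ F E
  have hcard : Nat.card Gal(E/F) = Module.finrank F E := IsGalois.card_aut_eq_finrank F E
  obtain ⟨N, hN⟩ := exists_mul_aeval_derivative_minpoly_eq (B := B) F E hϖ
  obtain ⟨α, h, hα, hh, hdeg, hdvd⟩ := exists_monic_adjoin_eq_top_and_pow_dvd_aeval (B := B)
    Gal(E/F) hP hx hϖ₀ hϖ hunit (hcard ▸ hFE) (2 * N)
  obtain ⟨c, hc⟩ := hN α hα
  have hminpoly : (minpoly A α).natDegree = Nat.card Gal(E/F) := by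
    rw [IsGaloisGroup.card_eq_finrank' Gal(E/F) A B,
      (PowerBasis.ofAdjoinEqTop' (Algebra.IsIntegral.isIntegral α) hα).finrank,
      PowerBasis.ofAdjoinEqTop'_dim]
  obtain ⟨g, β, hg, hg_deg, hβ, hβ_gen⟩ := exists_monic_aeval_eq_zero_of_pow_dvd_aeval hP hx hϖ₀
    (fun h0 => hϖ.ne_zero (by rw [h0, map_zero])) hα
    (by rw [hc, IsScalarTower.algebraMap_apply R A B, map_pow (algebraMap R A)]) hh
    (hdeg.trans hminpoly.symm) hdvd
  exact ⟨g, β, hg, by rw [hg_deg, hdeg, hcard], hβ, adjoin_algebraMap_singleton_eq_top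
    (M := nonZeroDivisors A) (fun a ha => IsFractionRing.to_map_ne_zero_of_mem_nonZeroDivisors ha)
    hβ_gen⟩

end TameGenerator

section LocalizationAtPrimeElement

section

variable {R : Type*} (A : Type*) [CommRing R] [CommRing A] [Algebra R A] {ϖ : R}
  [(Ideal.span {ϖ}).IsPrime] [IsLocalization.AtPrime A (Ideal.span {ϖ})] [IsLocalRing A]

theorem mk_maximalIdeal_algebraMap_eq_zero_iff_dvd (r : R) :
    Ideal.Quotient.mk (IsLocalRing.maximalIdeal A) (algebraMap R A r) = 0 ↔ ϖ ∣ r := by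
  rw [Ideal.Quotient.eq_zero_iff_mem, ← Ideal.mem_under,
    IsLocalization.AtPrime.under_maximalIdeal A (Ideal.span {ϖ}), Ideal.mem_span_singleton]

theorem infinite_quotient_maximalIdeal_of_mem_jacobson {x : R}
    (hx : x ∈ Ideal.jacobson (⊥ : Ideal R)) (hϖx : ¬ ϖ ∣ x) :
    Infinite (A ⧸ IsLocalRing.maximalIdeal A) := by
  by_contra hfin
  rw [not_infinite_iff_finite] at hfin
  have hker (r : R) := mk_maximalIdeal_algebraMap_eq_zero_iff_dvd A (ϖ := ϖ) r
  have : Finite (R ⧸ Ideal.span {ϖ}) := by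
    refine Finite.of_injective (Ideal.Quotient.lift (Ideal.span {ϖ})
      ((Ideal.Quotient.mk (IsLocalRing.maximalIdeal A)).comp (algebraMap R A))
      fun r hr => (hker r).2 (Ideal.mem_span_singleton.1 hr)) ?_
    exact RingHom.lift_injective_of_ker_le_ideal _ _ fun r hr =>
      Ideal.mem_span_singleton.2 ((hker r).1 hr)
  have hmax : (Ideal.span {ϖ}).IsMaximal :=
    Ideal.Quotient.maximal_of_isField _ (Finite.isField_of_domain _)
  exact hϖx (Ideal.mem_span_singleton.1 (Ideal.mem_sInf.1 hx ⟨bot_le, hmax⟩))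

end

theorem isDiscreteValuationRing_and_irreducible_of_prime {R : Type*} (A : Type*) [CommRing R]
    [IsDomain R] [IsNoetherianRing R] [CommRing A] [IsDomain A] [Algebra R A] {ϖ : R}
    (hϖ : Prime ϖ) [(Ideal.span {ϖ}).IsPrime] [IsLocalization.AtPrime A (Ideal.span {ϖ})] :
    IsDiscreteValuationRing A ∧ Irreducible (algebraMap R A ϖ) := by
  have : IsLocalRing A := IsLocalization.AtPrime.isLocalRing A (Ideal.span {ϖ})
  have : IsNoetherianRing A :=
    IsLocalization.isNoetherianRing (Ideal.span {ϖ}).primeCompl A inferInstance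
  have hmax : IsLocalRing.maximalIdeal A = Ideal.span {algebraMap R A ϖ} := by
    rw [← IsLocalization.AtPrime.map_eq_maximalIdeal (Ideal.span {ϖ}) A, Ideal.map_span,
      Set.image_singleton]
  have hne : algebraMap R A ϖ ≠ 0 := by
    rw [Ne, map_eq_zero_iff _ (IsLocalization.injective A
      (Ideal.primeCompl_le_nonZeroDivisors (Ideal.span {ϖ})))]
    exact hϖ.ne_zero
  have hfield : ¬ IsField A := by
    rwa [IsLocalRing.isField_iff_maximalIdeal_eq, hmax, Ideal.span_singleton_eq_bot]
  have : IsDiscreteValuationRing A := by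
    refine ((IsDiscreteValuationRing.TFAE A hfield).out 0 4).2 ?_
    rw [hmax]
    exact ⟨_, rfl⟩
  exact ⟨this, IsDiscreteValuationRing.irreducible_of_span_eq_maximalIdeal _ hne hmax⟩

variable {P R : Type*} (F : Type*) {E : Type*} [CommRing P] [CommRing R] [IsDomain R]
  [IsNoetherianRing R] [Algebra P R] {x ϖ : R} [IsAdicComplete (Ideal.span {x}) R]
  [Field F] [Algebra R F] [IsFractionRing R F] [Field E] [Algebra F E] [Algebra R E]
  [IsScalarTower R F E] [FiniteDimensional F E] [IsGalois F E]

theorem exists_monic_aeval_map_eq_zero_and_adjoin_eq_top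
    (hP : HasWeierstrassApproximation P ϖ) (hϖ : Prime ϖ) (hx : ¬ ϖ ∣ x) {ϖ₀ : P}
    (hϖ₀ : algebraMap P R ϖ₀ = ϖ) (hunit : ∀ e : ℕ, ¬ ϖ ∣ (e : R) → IsUnit (e : R))
    (hFE : ¬ ϖ ∣ (Module.finrank F E : R)) :
    ∃ (g : P[X]) (β : E), g.Monic ∧ g.natDegree = Module.finrank F E ∧
      aeval β (g.map (algebraMap P R)) = 0 ∧ Algebra.adjoin F {β} = ⊤ := by
  have hprime : (Ideal.span {ϖ}).IsPrime := (Ideal.span_singleton_prime hϖ.ne_zero).2 hϖ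
  let A := Localization.AtPrime (Ideal.span {ϖ})
  have hle := (Ideal.span {ϖ}).primeCompl_le_nonZeroDivisors
  have : IsDomain A := IsLocalization.isDomain_localization hle
  obtain ⟨_, hirr⟩ := isDiscreteValuationRing_and_irreducible_of_prime A hϖ
  let : Algebra A F := IsLocalization.localizationAlgebraOfSubmonoidLe A F _ _ hle
  have : IsScalarTower R A F :=
    IsLocalization.localization_isScalarTower_of_submonoid_le A F _ _ hle
  have : IsFractionRing A F :=
    IsFractionRing.isFractionRing_of_isDomain_of_isLocalization (Ideal.span {ϖ}).primeCompl A F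
  let : Algebra A E := Algebra.compHom E (algebraMap A F)
  have : IsScalarTower A F E := IsScalarTower.of_algebraMap_eq' rfl
  have : IsScalarTower R A E := .to₁₂₄ R A F E
  let B := integralClosure A E
  have : Module.Finite A B := IsIntegralClosure.finite A F E B
  have : IsDedekindDomain B := IsIntegralClosure.isDedekindDomain A F E B
  let : Algebra P B := Algebra.compHom B (algebraMap P R)
  have : IsScalarTower P R B := IsScalarTower.of_algebraMap_eq' rfl
  have hκ (n : ℕ) : (n : A ⧸ IsLocalRing.maximalIdeal A) = 0 ↔ ϖ ∣ (n : R) := by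
    rw [← mk_maximalIdeal_algebraMap_eq_zero_iff_dvd A, map_natCast, map_natCast]
  have : Infinite (A ⧸ IsLocalRing.maximalIdeal A) :=
    infinite_quotient_maximalIdeal_of_mem_jacobson A
      (IsAdicComplete.le_jacobson_bot _ (Ideal.mem_span_singleton_self x)) hx
  obtain ⟨g, β, hg, hdeg, hβ, hgen⟩ := exists_monic_adjoin_eq_top_of_isGalois (B := B) F E hP hx
    hϖ₀ hirr (fun e he => hunit e ((hκ e).not.1 he)) ((hκ _).not.2 hFE)
  refine ⟨g, algebraMap B E β, hg, hdeg, ?_, hgen⟩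
  rw [aeval_algebraMap_apply, aeval_map_algebraMap, hβ, map_zero]

end LocalizationAtPrimeElement

section PowerSeries

section

variable {T : Type*} [CommRing T]

theorem powerSeries_C_dvd_iff_map_mk_eq_zero (t : T) (g : PowerSeries T) :
    PowerSeries.C t ∣ g ↔ PowerSeries.map (Ideal.Quotient.mk (Ideal.span {t})) g = 0 := by
  simp only [PowerSeries.ext_iff, PowerSeries.coeff_map, map_zero, Ideal.Quotient.eq_zero_iff_mem,
    Ideal.mem_span_singleton]
  constructor
  · rintro ⟨h, rfl⟩ n
    rw [PowerSeries.coeff_C_mul]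
    exact dvd_mul_right t _
  · intro h
    choose r hr using h
    exact ⟨PowerSeries.mk r, PowerSeries.ext fun n => by
      rw [PowerSeries.coeff_C_mul, PowerSeries.coeff_mk, hr]⟩

theorem prime_powerSeries_C {t : T} (ht : Prime t) : Prime (PowerSeries.C t) := by
  have : (Ideal.span {t}).IsPrime := (Ideal.span_singleton_prime ht.ne_zero).2 ht
  refine ⟨?_, ?_, fun a b => ?_⟩
  · rw [Ne, map_eq_zero_iff _ PowerSeries.C_injective]
    exact ht.ne_zero
  · rw [isUnit_iff_dvd_one, powerSeries_C_dvd_iff_map_mk_eq_zero, map_one]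
    exact one_ne_zero
  · simp only [powerSeries_C_dvd_iff_map_mk_eq_zero, map_mul, mul_eq_zero, imp_self]

theorem powerSeries_C_dvd_natCast_iff (t : T) (n : ℕ) :
    PowerSeries.C t ∣ (n : PowerSeries T) ↔ t ∣ n := by
  rw [powerSeries_C_dvd_iff_map_mk_eq_zero, map_natCast, ← map_natCast PowerSeries.C,
    map_eq_zero_iff _ PowerSeries.C_injective, ← map_natCast (Ideal.Quotient.mk (Ideal.span {t})),
    Ideal.Quotient.eq_zero_iff_mem, Ideal.mem_span_singleton]

theorem algebraMap_polynomial_powerSeries (q : T[X]) :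
    algebraMap T[X] (PowerSeries T) q = Polynomial.coeToPowerSeries.ringHom q := by
  rw [PowerSeries.algebraMap_apply', Algebra.algebraMap_self, PowerSeries.map_id]
  rfl

end

theorem hasWeierstrassApproximation_polynomial {T : Type*} [CommRing T] [IsLocalRing T]
    [IsAdicComplete (IsLocalRing.maximalIdeal T) T] {t : T}
    (ht : IsLocalRing.maximalIdeal T = Ideal.span {t}) :
    HasWeierstrassApproximation T[X] (PowerSeries.C t) := by
  have map_residue_ne_zero {d : PowerSeries T} (hd : ¬ PowerSeries.C t ∣ d) :
      d.map (IsLocalRing.residue T) ≠ 0 := by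
    rw [powerSeries_C_dvd_iff_map_mk_eq_zero, ← ht] at hd
    exact hd
  constructor
  · intro d hd
    obtain ⟨w, u, h⟩ := PowerSeries.exists_isWeierstrassFactorization (map_residue_ne_zero hd)
    refine ⟨w, Associated.symm ⟨h.isUnit.unit, ?_⟩⟩
    rw [algebraMap_polynomial_powerSeries, h.isUnit.unit_spec]
    exact h.eq_mul.symm
  · intro d hd r
    obtain ⟨r, rfl⟩ := Ideal.Quotient.mk_surjective r
    obtain ⟨q, s, h⟩ := PowerSeries.exists_isWeierstrassDivision (f := r) (map_residue_ne_zero hd)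
    refine ⟨s, (Ideal.Quotient.eq.2 (Ideal.mem_span_singleton.2 ⟨q, ?_⟩)).symm⟩
    rw [algebraMap_polynomial_powerSeries, h.eq_mul_add]
    exact add_sub_cancel_right _ _

variable {T : Type*} [CommRing T] [IsDomain T] [IsDiscreteValuationRing T]
  [IsAdicComplete (IsLocalRing.maximalIdeal T) T]

theorem exists_monic_polynomial_and_adjoin_eq_top (F : Type*) {E : Type*} [Field F]
    [Algebra (PowerSeries T) F] [IsFractionRing (PowerSeries T) F] [Field E] [Algebra F E]
    [Algebra (PowerSeries T) E] [IsScalarTower (PowerSeries T) F E] [FiniteDimensional F E]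
    [IsGalois F E] (hFE : (Module.finrank F E : IsLocalRing.ResidueField T) ≠ 0) :
    ∃ (g : T[X][X]) (β : E), g.Monic ∧ g.natDegree = Module.finrank F E ∧
      aeval β (g.map (algebraMap T[X] (PowerSeries T))) = 0 ∧ Algebra.adjoin F {β} = ⊤ := by
  obtain ⟨t, ht⟩ := IsDiscreteValuationRing.exists_irreducible T
  have hprime := prime_powerSeries_C ht.prime
  have not_dvd_iff (n : ℕ) : ¬ t ∣ n ↔ IsUnit (n : T) := by
    rw [← Ideal.mem_span_singleton, ← ht.maximalIdeal_eq, IsLocalRing.notMem_maximalIdeal]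
  have hX : ¬ PowerSeries.C t ∣ PowerSeries.X := by
    rw [powerSeries_C_dvd_iff_map_mk_eq_zero, PowerSeries.map_X]
    have : Nontrivial (T ⧸ Ideal.span {t}) := by
      rw [← ht.maximalIdeal_eq]
      exact Ideal.Quotient.nontrivial_iff.2 (IsLocalRing.maximalIdeal.isMaximal T).ne_top
    exact PowerSeries.X_ne_zero
  refine exists_monic_aeval_map_eq_zero_and_adjoin_eq_top F
    (hasWeierstrassApproximation_polynomial ht.maximalIdeal_eq) hprime hX
    (ϖ₀ := C t) ?_ (fun e he => ?_) ?_
  · rw [algebraMap_polynomial_powerSeries, Polynomial.coeToPowerSeries.ringHom_apply,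
      Polynomial.coe_C]
  · rw [powerSeries_C_dvd_natCast_iff, not_dvd_iff] at he
    simpa using he.map PowerSeries.C
  · rwa [powerSeries_C_dvd_natCast_iff, not_dvd_iff, ← IsLocalRing.residue_ne_zero_iff_isUnit,
      map_natCast]

end PowerSeries

section Descent

theorem isSeparable_adjoinRoot {k : Type*} [Field k] {h : k[X]} [Fact (Irreducible h)]
    (hh : h.Monic) (hsep : h.Separable) : Algebra.IsSeparable k (AdjoinRoot h) := by
  have htop : IntermediateField.adjoin k {AdjoinRoot.root h} = ⊤ := by
    rw [← IntermediateField.toSubalgebra_inj, IntermediateField.top_toSubalgebra, eq_top_iff,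
      ← AdjoinRoot.adjoinRoot_eq_top]
    exact IntermediateField.algebra_adjoin_le_adjoin k _
  have : Algebra.IsSeparable k (IntermediateField.adjoin k {AdjoinRoot.root h}) := by
    rwa [IntermediateField.isSeparable_adjoin_simple_iff_isSeparable, IsSeparable,
      AdjoinRoot.minpoly_root hh.ne_zero, hh.leadingCoeff, inv_one, C_1, mul_one]
  rw [htop] at this
  exact AlgEquiv.Algebra.isSeparable IntermediateField.topEquiv

variable {k F E : Type*} [Field k] [Field F] [Field E] [Algebra k F] [Algebra F E] [Algebra k E]
  [IsScalarTower k F E] [FiniteDimensional F E] {h : k[X]} {β : E} (hh : h.Monic)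
  (hdeg : h.natDegree = Module.finrank F E) (hβ : aeval β h = 0)
  (hgen : Algebra.adjoin F {β} = ⊤)

include hh hdeg hβ hgen

theorem map_algebraMap_eq_minpoly : h.map (algebraMap k F) = minpoly F β := by
  refine eq_of_monic_of_dvd_of_natDegree_le (minpoly.monic (.of_finite F β)) (hh.map _)
    (minpoly.dvd F β (by rwa [aeval_map_algebraMap])) ?_
  rw [hh.natDegree_map, natDegree_minpoly_eq_finrank hgen, hdeg]

theorem nonempty_adjoinRoot_tensorProduct_algEquiv :
    Nonempty (AdjoinRoot h ⊗[k] F ≃ₐ[F] E) := by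
  let φ : AdjoinRoot h →ₐ[k] E := AdjoinRoot.liftAlgHom h (Algebra.ofId k E) β hβ
  let Φ : F ⊗[k] AdjoinRoot h →ₐ[F] E :=
    Algebra.TensorProduct.lift (Algebra.ofId F E) φ fun _ _ => Commute.all _ _
  have hsurj : Function.Surjective Φ := by
    rw [← AlgHom.range_eq_top, eq_top_iff, ← hgen, Algebra.adjoin_le_iff,
      Set.singleton_subset_iff]
    refine ⟨1 ⊗ₜ AdjoinRoot.root h, (Algebra.TensorProduct.lift_tmul _ _ _ _ _).trans ?_⟩
    rw [map_one, one_mul]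
    exact AdjoinRoot.lift_root hβ
  have hrank : Module.finrank F (F ⊗[k] AdjoinRoot h) = Module.finrank F E := by
    rw [Module.finrank_baseChange, (AdjoinRoot.powerBasis hh.ne_zero).finrank,
      AdjoinRoot.powerBasis_dim, hdeg]
  have : Module.Finite k (AdjoinRoot h) := hh.finite_adjoinRoot
  have hinj : Function.Injective Φ :=
    (LinearMap.injective_iff_surjective_of_finrank_eq_finrank (f := Φ.toLinearMap) hrank).2 hsurj
  exact ⟨(Algebra.TensorProduct.commRight k F (AdjoinRoot h)).symm.trans
    (AlgEquiv.ofBijective Φ ⟨hinj, hsurj⟩)⟩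

end Descent

theorem exists_isSeparable_tensorProduct_algEquiv.{u, v, w} {k : Type u} {F : Type v} {E : Type w}
    [Field k] [Field F] [Field E] [Algebra k F] [Algebra F E] [Algebra k E] [IsScalarTower k F E]
    [FiniteDimensional F E] [Algebra.IsSeparable F E] {h : k[X]} {β : E} (hh : h.Monic)
    (hdeg : h.natDegree = Module.finrank F E) (hβ : aeval β h = 0)
    (hgen : Algebra.adjoin F {β} = ⊤) :
    ∃ (L : Type u) (_ : Field L) (_ : Algebra k L), FiniteDimensional k L ∧
      Algebra.IsSeparable k L ∧ Nonempty (L ⊗[k] F ≃ₐ[F] E) := by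
  have hmin := map_algebraMap_eq_minpoly hh hdeg hβ hgen
  have : Fact (Irreducible h) := ⟨hh.irreducible_of_irreducible_map (algebraMap k F) h
    (hmin ▸ minpoly.irreducible (.of_finite F β))⟩
  have hsep : h.Separable := (separable_map (algebraMap k F)).1
    (hmin ▸ Algebra.IsSeparable.isSeparable F β)
  exact ⟨AdjoinRoot h, inferInstance, inferInstance, hh.finite_adjoinRoot,
    isSeparable_adjoinRoot hh hsep, nonempty_adjoinRoot_tensorProduct_algEquiv hh hdeg hβ hgen⟩

theorem point_to_global_tame_char_p_general.{u, v} {T : Type u} [CommRing T] [IsDomain T]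
    [IsDiscreteValuationRing T] [IsAdicComplete (IsLocalRing.maximalIdeal T) T]
    (ψ : RatFunc (FractionRing T) →+* FractionRing (PowerSeries T))
    (hψ : ∀ q : T[X],
      ψ (algebraMap (FractionRing T)[X] (RatFunc (FractionRing T))
          (q.map (algebraMap T (FractionRing T)))) =
        algebraMap (PowerSeries T) (FractionRing (PowerSeries T)) (coeToPowerSeries.ringHom q))
    (E_P : Type v) [Field E_P] [Algebra (FractionRing (PowerSeries T)) E_P]
    [FiniteDimensional (FractionRing (PowerSeries T)) E_P]
    [IsGalois (FractionRing (PowerSeries T)) E_P]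
    (hdeg : (Module.finrank (FractionRing (PowerSeries T)) E_P : IsLocalRing.ResidueField T) ≠ 0) :
    letI : Algebra (RatFunc (FractionRing T)) (FractionRing (PowerSeries T)) := ψ.toAlgebra
    ∃ (E : Type u) (_ : Field E) (_ : Algebra (RatFunc (FractionRing T)) E),
      FiniteDimensional (RatFunc (FractionRing T)) E ∧
      Algebra.IsSeparable (RatFunc (FractionRing T)) E ∧
      Nonempty ((E ⊗[RatFunc (FractionRing T)] FractionRing (PowerSeries T))
        ≃ₐ[FractionRing (PowerSeries T)] E_P) := by
  let : Algebra (RatFunc (FractionRing T)) (FractionRing (PowerSeries T)) := ψ.toAlgebra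
  let F := FractionRing (PowerSeries T)
  let : Algebra (PowerSeries T) E_P := Algebra.compHom E_P (algebraMap (PowerSeries T) F)
  have : IsScalarTower (PowerSeries T) F E_P := IsScalarTower.of_algebraMap_eq' rfl
  let : Algebra (RatFunc (FractionRing T)) E_P := Algebra.compHom E_P ψ
  have : IsScalarTower (RatFunc (FractionRing T)) F E_P := IsScalarTower.of_algebraMap_eq' rfl
  obtain ⟨g, β, hg, hg_deg, hβ, hgen⟩ := exists_monic_polynomial_and_adjoin_eq_top F hdeg
  let χ : T[X] →+* RatFunc (FractionRing T) :=
    (algebraMap (FractionRing T)[X] (RatFunc (FractionRing T))).comp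
      (mapRingHom (algebraMap T (FractionRing T)))
  have hχ : (algebraMap (RatFunc (FractionRing T)) F).comp χ =
      (algebraMap (PowerSeries T) F).comp (algebraMap T[X] (PowerSeries T)) :=
    RingHom.ext fun q => (hψ q).trans
      (congrArg (algebraMap (PowerSeries T) F) (algebraMap_polynomial_powerSeries q).symm)
  refine exists_isSeparable_tensorProduct_algEquiv (hg.map χ) (by rwa [hg.natDegree_map]) ?_ hgen
  rw [← aeval_map_algebraMap F, Polynomial.map_map, hχ, ← Polynomial.map_map, aeval_map_algebraMap,
    hβ]

/-- Tame descent in residue characteristic `p`: if `T` is a complete discrete valuation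
ring with residue field of characteristic `p > 0` and fraction field `K`, then every
finite Galois field extension of `Frac(T⟦x⟧)` of degree prime to `p` is induced by a
finite separable field extension of the rational function field `K(x)`, where `K(x)`
embeds in `Frac(T⟦x⟧)` via `T[x] ⊆ T⟦x⟧`. -/
theorem point_to_global_tame_char_p
    (p : ℕ) (hp : p.Prime)
    (T : Type) [CommRing T] [IsDomain T] [IsDiscreteValuationRing T]
    [IsAdicComplete (IsLocalRing.maximalIdeal T) T]
    [CharP (IsLocalRing.ResidueField T) p]
    (ψ : RatFunc (FractionRing T) →+* FractionRing (PowerSeries T))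
    (hψ : ∀ q : Polynomial T,
      ψ (algebraMap (Polynomial (FractionRing T)) (RatFunc (FractionRing T))
          (q.map (algebraMap T (FractionRing T)))) =
        algebraMap (PowerSeries T) (FractionRing (PowerSeries T))
          (Polynomial.coeToPowerSeries.ringHom q))
    (E_P : Type) [Field E_P] [Algebra (FractionRing (PowerSeries T)) E_P]
    [FiniteDimensional (FractionRing (PowerSeries T)) E_P]
    [IsGalois (FractionRing (PowerSeries T)) E_P]
    (hdeg : ¬ p ∣ Module.finrank (FractionRing (PowerSeries T)) E_P) :
    letI : Algebra (RatFunc (FractionRing T)) (FractionRing (PowerSeries T)) :=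
      ψ.toAlgebra
    ∃ (E : Type) (_ : Field E) (_ : Algebra (RatFunc (FractionRing T)) E),
      FiniteDimensional (RatFunc (FractionRing T)) E ∧
      Algebra.IsSeparable (RatFunc (FractionRing T)) E ∧
      Nonempty ((E ⊗[RatFunc (FractionRing T)] FractionRing (PowerSeries T))
        ≃ₐ[FractionRing (PowerSeries T)] E_P) :=
  point_to_global_tame_char_p_general ψ hψ E_P ((CharP.cast_eq_zero_iff _ p _).not.2 hdeg)
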